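/- arXiv:1507.06790 — 3 statements merged into one kernel-verified Lean document; each statement's English description precedes it below -/
import Mathlib

section
/- If α ∈ (1/2, 1), then the strong renewal theorem holds: the limit lim_{x→∞} x·F̄(x)·g(x) exists and is a strictly positive real number (its value is α·E(Y^{−α}), where Y is the limiting one-sided stable random variable of index α). -/
/-!
The proof is Fourier-analytic, after Garsia and Lamperti. Let `φ` be the characteristic function
of the step. Since `p` is aperiodic, `φ ≠ 1` on `(0, π]`, and Fourier inversion gives
`g(n) = π⁻¹ ∫₀^π Re (e^{-inθ} / (1 - φ(θ))) dθ`. Substituting `θ = t / n`,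
`n F̄(n) g(n) = π⁻¹ Re ∫₀^{nπ} qₙ(t) e^{-it} dt` with `qₙ(t) = F̄(n) / (1 - φ(t / n))`.

Regular variation makes `qₙ` converge pointwise (`exists_tendsto_exponent`). Potter bounds with
exponents `1/2 < γ < α < β < 1`, together with `Re (1 - φ(θ)) ≥ c F̄(1/θ)`, bound `|qₙ(t)|` by a
multiple of `t^{-β} + t^{-γ}`. This is integrable at `0` but not at infinity; there the
cancellation in `e^{-it}` is exploited by a shift by half a period: `|φ(θ + π/n) - φ(θ)| = O(F̄(n))`
yields `|qₙ(t) - qₙ(t + π)| = O(t^{-2γ})`, and `2γ > 1`, which is where `α > 1/2` enters. Dominated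
convergence (`exists_tendsto_osc`) then shows that the limit exists (`exists_limit`).

The limit is nonnegative. It is nonzero by the last-renewal identity `∑_{y ≤ N} g(y) F̄(N - y) = 1`:
summing it over `N` gives `N + 1 ≤ (∑_{y ≤ N} g(y)) (∑_{k ≤ N} F̄(k))`, whereas
`x F̄(x) g(x) → 0` would make the right-hand side `o(N)` (`not_tendsto_zero`).
-/

open Filter Topology

/-- `convPow p n x = P(Sₙ = x)` for a random walk with i.i.d. steps distributed
according to the pmf `p` on the nonnegative integers. -/
noncomputable def convPow (p : ℕ → ℝ) : ℕ → ℕ → ℝ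
  | 0, x => if x = 0 then 1 else 0
  | n + 1, x => ∑ y ∈ Finset.range (x + 1), convPow p n y * p (x - y)

/-- `Fbar p x = P(X > x)`, the tail of the step distribution. -/
noncomputable def Fbar (p : ℕ → ℝ) (x : ℝ) : ℝ := ∑' k : ℕ, if x < (k : ℝ) then p k else 0

/-- The renewal mass function `g(x) = Σ_{n ≥ 0} P(Sₙ = x)`. -/
noncomputable def renewalMass (p : ℕ → ℝ) (x : ℕ) : ℝ := ∑' n : ℕ, convPow p n x


open MeasureTheory

namespace SRT

/-! ### The tail function -/

section Tail

variable {p : ℕ → ℝ} {α : ℝ}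

lemma summable_tail (hp0 : ∀ k, 0 ≤ p k) (hp1 : HasSum p 1) (x : ℝ) :
    Summable fun k : ℕ => if x < (k : ℝ) then p k else 0 := by
  refine Summable.of_nonneg_of_le (fun k => ?_) (fun k => ?_) hp1.summable
  · split_ifs
    exacts [hp0 k, le_rfl]
  · split_ifs
    exacts [le_rfl, hp0 k]

lemma Fbar_nonneg (hp0 : ∀ k, 0 ≤ p k) (x : ℝ) : 0 ≤ Fbar p x := by
  refine tsum_nonneg fun k => ?_
  split_ifs
  exacts [hp0 k, le_rfl]

lemma Fbar_le_one (hp0 : ∀ k, 0 ≤ p k) (hp1 : HasSum p 1) (x : ℝ) : Fbar p x ≤ 1 := by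
  rw [← hp1.tsum_eq]
  refine (summable_tail hp0 hp1 x).tsum_le_tsum (fun k => ?_) hp1.summable
  split_ifs
  exacts [le_rfl, hp0 k]

lemma Fbar_antitone (hp0 : ∀ k, 0 ≤ p k) (hp1 : HasSum p 1) : Antitone (Fbar p) := by
  intro x y hxy
  refine (summable_tail hp0 hp1 y).tsum_le_tsum (fun k => ?_) (summable_tail hp0 hp1 x)
  by_cases h : y < (k : ℝ)
  · simp [h, hxy.trans_lt h]
  · simp only [h, if_false]
    split_ifs
    exacts [hp0 k, le_rfl]

/-- If the tail vanished somewhere it would vanish eventually, and the ratio in the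
regular variation hypothesis would be the junk value `0 / 0 = 0`. -/
lemma Fbar_pos (hp0 : ∀ k, 0 ≤ p k) (hp1 : HasSum p 1)
    (hreg : ∀ l : ℝ, 0 < l →
      Tendsto (fun x : ℝ => Fbar p (l * x) / Fbar p x) atTop (nhds (l ^ (-α)))) (x : ℝ) :
    0 < Fbar p x := by
  by_contra hx
  have hx0 : Fbar p x = 0 := le_antisymm (not_lt.1 hx) (Fbar_nonneg hp0 x)
  have h1 := hreg 1 one_pos
  rw [Real.one_rpow] at h1
  have h2 : Tendsto (fun x : ℝ => Fbar p (1 * x) / Fbar p x) atTop (nhds 0) := by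
    refine tendsto_const_nhds.congr' ?_
    filter_upwards [eventually_ge_atTop x] with y hy
    have : Fbar p y = 0 :=
      le_antisymm ((Fbar_antitone hp0 hp1 hy).trans_eq hx0) (Fbar_nonneg hp0 y)
    simp [this]
  exact one_ne_zero (tendsto_nhds_unique h1 h2)

end Tail

/-! ### Potter bounds -/

section Potter

variable {F : ℝ → ℝ} {α : ℝ}

lemma iterate_up {N b : ℝ} (hN : 0 < N) (hb : 0 ≤ b) (h : ∀ x, N ≤ x → F x ≤ b * F (2 * x))
    (n : ℕ) : ∀ x, N ≤ x → F x ≤ b ^ n * F (2 ^ n * x) := by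
  induction n with
  | zero => intro x _; simp
  | succ n ih =>
    intro x hx
    have h1 := ih x hx
    have h2 : N ≤ 2 ^ n * x := by
      nlinarith [one_le_pow₀ (M₀ := ℝ) (one_le_two) (n := n)]
    calc F x ≤ b ^ n * F (2 ^ n * x) := h1
      _ ≤ b ^ n * (b * F (2 * (2 ^ n * x))) := by gcongr; exact h _ h2
      _ = _ := by rw [pow_succ, pow_succ, mul_assoc]; ring_nf

lemma iterate_down {N b : ℝ} (hN : 0 < N) (hb : 0 ≤ b) (h : ∀ x, N ≤ x → F (2 * x) ≤ b * F x)
    (n : ℕ) : ∀ x, N ≤ x → F (2 ^ n * x) ≤ b ^ n * F x := by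
  induction n with
  | zero => intro x _; simp
  | succ n ih =>
    intro x hx
    have h1 := ih x hx
    have h2 : N ≤ 2 ^ n * x := by
      nlinarith [one_le_pow₀ (M₀ := ℝ) (one_le_two) (n := n)]
    calc F (2 ^ (n + 1) * x) = F (2 * (2 ^ n * x)) := by ring_nf
      _ ≤ b * F (2 ^ n * x) := h _ h2
      _ ≤ b * (b ^ n * F x) := by gcongr
      _ = _ := by rw [pow_succ]; ring

lemma rpow_pow_comm' (b : ℝ) (n : ℕ) : ((2 : ℝ) ^ b) ^ n = ((2 : ℝ) ^ n) ^ b := by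
  rw [← Real.rpow_natCast, ← Real.rpow_mul (by norm_num), mul_comm, Real.rpow_mul (by norm_num),
    Real.rpow_natCast]

/-- Upper Potter bound, obtained by iterating the doubling relation `F x ≤ 2 ^ β * F (2 * x)`. -/
lemma potter_up (hF : Antitone F) (hpos : ∀ x, 0 < F x) (hle : ∀ x, F x ≤ 1)
    (hlim : Tendsto (fun x => F (2 * x) / F x) atTop (nhds (2 ^ (-α)))) {β : ℝ} (hβ : α < β)
    (hβ0 : 0 < β) :
    ∃ C : ℝ, 0 < C ∧ ∀ u v, 0 < u → u ≤ v → F u ≤ C * (v / u) ^ β * F v := by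
  have hlt : (2 : ℝ) ^ (-β) < 2 ^ (-α) := Real.rpow_lt_rpow_of_exponent_lt (by norm_num) (by linarith)
  obtain ⟨N, hN⟩ := eventually_atTop.1 (hlim.eventually (lt_mem_nhds hlt))
  set M := max N 1
  have hM : 0 < M := lt_max_of_lt_right one_pos
  have hstep : ∀ x, M ≤ x → F x ≤ 2 ^ β * F (2 * x) := by
    intro x hx
    have := hN x ((le_max_left _ _).trans hx)
    rw [lt_div_iff₀ (hpos x), Real.rpow_neg (by norm_num)] at this
    have h2 : (0 : ℝ) < 2 ^ β := by positivity
    calc F x = 2 ^ β * ((2 ^ β)⁻¹ * F x) := by field_simp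
      _ ≤ _ := by gcongr
  have hbig : ∀ u v, M ≤ u → u ≤ v → F u ≤ 2 ^ β * (v / u) ^ β * F v := by
    intro u v hu huv
    have hu0 : 0 < u := hM.trans_le hu
    obtain ⟨n, hn1, hn2⟩ := exists_nat_pow_near ((one_le_div hu0).2 huv) (one_lt_two (α := ℝ))
    have h1 := iterate_up hM (by positivity) hstep (n + 1) u hu
    have h2 : v ≤ 2 ^ (n + 1) * u := ((div_lt_iff₀ hu0).1 hn2).le
    have hFv := (hpos v).le
    calc F u ≤ (2 ^ β) ^ (n + 1) * F (2 ^ (n + 1) * u) := h1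
      _ ≤ (2 ^ β) ^ (n + 1) * F v := by gcongr; exact hF h2
      _ = 2 ^ β * (2 ^ n) ^ β * F v := by rw [pow_succ', rpow_pow_comm']
      _ ≤ _ := by gcongr
  have h2b : (1 : ℝ) ≤ 2 ^ β := Real.one_le_rpow (by norm_num) hβ0.le
  have hFM := hpos M
  refine ⟨2 ^ β / F M, by positivity, fun u v hu huv => ?_⟩
  have hv := hpos v
  have hv0 : 0 < v := hu.trans_le huv
  have hone : 1 ≤ (v / u) ^ β := Real.one_le_rpow ((one_le_div hu).2 huv) hβ0.le
  rcases le_total M u with h | h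
  · refine (hbig u v h huv).trans ?_
    gcongr
    rw [le_div_iff₀ hFM]
    nlinarith [hle M]
  · refine (hle u).trans ?_
    have key : F M ≤ 2 ^ β * (v / u) ^ β * F v := by
      rcases le_total v M with h' | h'
      · calc F M ≤ F v := hF h'
          _ = 1 * 1 * F v := by ring
          _ ≤ _ := by gcongr
      · refine (hbig M v le_rfl h').trans ?_
        gcongr
    calc (1 : ℝ) = F M / F M := by field_simp
      _ ≤ 2 ^ β * (v / u) ^ β * F v / F M := by gcongr
      _ = _ := by ring

/-- Lower Potter bound, obtained by iterating the doubling relation `F (2 * x) ≤ 2 ^ (-γ) * F x`.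
The arguments have to stay away from `0`, where `F` is bounded. -/
lemma potter_down (hF : Antitone F) (hpos : ∀ x, 0 < F x)
    (hlim : Tendsto (fun x => F (2 * x) / F x) atTop (nhds (2 ^ (-α)))) {γ : ℝ} (hγ : γ < α)
    (hγ0 : 0 < γ) {u₀ : ℝ} (hu₀ : 0 < u₀) :
    ∃ C : ℝ, 0 < C ∧ ∀ u v, u₀ ≤ u → u ≤ v → F v ≤ C * (u / v) ^ γ * F u := by
  have hlt : (2 : ℝ) ^ (-α) < 2 ^ (-γ) := Real.rpow_lt_rpow_of_exponent_lt (by norm_num) (by linarith)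
  obtain ⟨N, hN⟩ := eventually_atTop.1 (hlim.eventually (gt_mem_nhds hlt))
  set M := max N u₀
  have hM : 0 < M := lt_max_of_lt_right hu₀
  have hstep : ∀ x, M ≤ x → F (2 * x) ≤ 2 ^ (-γ) * F x := by
    intro x hx
    have := hN x ((le_max_left _ _).trans hx)
    rw [div_lt_iff₀ (hpos x)] at this
    exact this.le
  have hbig : ∀ u v, M ≤ u → u ≤ v → F v ≤ 2 ^ γ * (u / v) ^ γ * F u := by
    intro u v hu huv
    have hu0 : 0 < u := hM.trans_le hu
    have hv0 : 0 < v := hu0.trans_le huv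
    obtain ⟨n, hn1, hn2⟩ := exists_nat_pow_near ((one_le_div hu0).2 huv) (one_lt_two (α := ℝ))
    have h1 := iterate_down hM (by positivity) hstep n u hu
    have h2 : 2 ^ n * u ≤ v := (le_div_iff₀ hu0).1 hn1
    have hFu := (hpos u).le
    have h3 : (2 : ℝ)⁻¹ ^ (n + 1) ≤ u / v := by
      rw [inv_pow, inv_le_comm₀ (by positivity) (by positivity), inv_div]
      exact hn2.le
    calc F v ≤ F (2 ^ n * u) := hF h2
      _ ≤ (2 ^ (-γ)) ^ n * F u := h1
      _ = 2 ^ γ * ((2 : ℝ)⁻¹ ^ (n + 1)) ^ γ * F u := by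
        rw [inv_pow, Real.inv_rpow (by positivity), ← rpow_pow_comm', Real.rpow_neg (by norm_num),
          pow_succ, inv_pow]
        have : (2 : ℝ) ^ γ ≠ 0 := by positivity
        field_simp
      _ ≤ _ := by gcongr
  have h2b : (1 : ℝ) ≤ 2 ^ γ := Real.one_le_rpow (by norm_num) hγ0.le
  have hMu : 1 ≤ (M / u₀) ^ γ :=
    Real.one_le_rpow ((one_le_div hu₀).2 (le_max_right _ _)) hγ0.le
  refine ⟨2 ^ γ * (M / u₀) ^ γ, by positivity, fun u v hu huv => ?_⟩
  have hu0 : 0 < u := hu₀.trans_le hu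
  have hv0 : 0 < v := hu0.trans_le huv
  have hFu := (hpos u)
  rcases le_total M u with h | h
  · refine (hbig u v h huv).trans ?_
    gcongr
    nlinarith
  · have key : ∀ w, 0 < w → w ≤ M → (w / v) ^ γ ≤ (M / u₀) ^ γ * (u / v) ^ γ := by
      intro w hw hwM
      rw [← Real.mul_rpow (by positivity) (by positivity)]
      refine Real.rpow_le_rpow (by positivity) ?_ hγ0.le
      rw [div_mul_div_comm, div_le_div_iff₀ hv0 (by positivity)]
      have : w * u₀ ≤ M * u := mul_le_mul hwM hu hu₀.le hM.le
      nlinarith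
    rcases le_total v M with h' | h'
    · have h1 := key v hv0 h'
      rw [div_self hv0.ne', Real.one_rpow] at h1
      calc F v ≤ F u := hF huv
        _ = 1 * 1 * F u := by ring
        _ ≤ 2 ^ γ * ((M / u₀) ^ γ * (u / v) ^ γ) * F u := by gcongr
        _ = _ := by ring
    · have h1 := key M hM le_rfl
      have hFM := (hpos M).le
      calc F v ≤ 2 ^ γ * (M / v) ^ γ * F M := hbig M v le_rfl h'
        _ ≤ 2 ^ γ * ((M / u₀) ^ γ * (u / v) ^ γ) * F u := by gcongr; exact hF h
        _ = _ := by ring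

end Potter


/-! ### The characteristic function -/

/-- The characteristic function `θ ↦ E (exp (i θ X))` of the step distribution. -/
noncomputable def charFn (p : ℕ → ℝ) (θ : ℝ) : ℂ :=
  ∑' k : ℕ, (p k : ℂ) * Complex.exp (((k : ℝ) * θ : ℝ) * Complex.I)

section CharFn

variable {p : ℕ → ℝ} {α : ℝ}

lemma norm_charTerm (hp0 : ∀ k, 0 ≤ p k) (k : ℕ) (θ : ℝ) :
    ‖(p k : ℂ) * Complex.exp (((k : ℝ) * θ : ℝ) * Complex.I)‖ = p k := by
  rw [norm_mul, Complex.norm_exp_ofReal_mul_I, mul_one, Complex.norm_real, Real.norm_of_nonneg (hp0 k)]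

lemma summable_charTerm (hp0 : ∀ k, 0 ≤ p k) (hp1 : HasSum p 1) (θ : ℝ) :
    Summable fun k : ℕ => (p k : ℂ) * Complex.exp (((k : ℝ) * θ : ℝ) * Complex.I) :=
  Summable.of_norm (by simpa only [norm_charTerm hp0] using hp1.summable)

lemma continuous_charFn (hp0 : ∀ k, 0 ≤ p k) (hp1 : HasSum p 1) : Continuous (charFn p) := by
  refine continuous_tsum (u := p) (fun k => by fun_prop) hp1.summable (fun k θ => ?_)
  rw [norm_charTerm hp0]

lemma norm_charFn_le (hp0 : ∀ k, 0 ≤ p k) (hp1 : HasSum p 1) (θ : ℝ) : ‖charFn p θ‖ ≤ 1 := by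
  refine tsum_of_norm_bounded hp1 fun k => ?_
  rw [norm_charTerm hp0]

lemma hasSum_one_sub_re (hp0 : ∀ k, 0 ≤ p k) (hp1 : HasSum p 1) (θ : ℝ) :
    HasSum (fun k : ℕ => p k * (1 - Real.cos (k * θ))) (1 - charFn p θ).re := by
  have h1 := Complex.hasSum_re (summable_charTerm hp0 hp1 θ).hasSum
  have h2 := hp1.sub h1
  rw [Complex.sub_re, Complex.one_re]
  refine h2.congr_fun ?_ 
  intro k
  rw [Complex.re_ofReal_mul, Complex.exp_ofReal_mul_I_re]
  ring

lemma one_sub_re_nonneg (hp0 : ∀ k, 0 ≤ p k) (hp1 : HasSum p 1) (θ : ℝ) :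
    0 ≤ (1 - charFn p θ).re :=
  (hasSum_one_sub_re hp0 hp1 θ).nonneg fun k =>
    mul_nonneg (hp0 k) (sub_nonneg.2 (Real.cos_le_one _))

/-- Aperiodicity: on `(0, π]` the characteristic function has real part different from `1`.
The integers `k` with `k * θ ∈ 2πℤ` form a subgroup `dℤ`; if the real part were `1`, it would
contain the support of `p`, so `d = 1` and `θ ∈ 2πℤ`. -/
lemma one_sub_re_pos (hp0 : ∀ k, 0 ≤ p k) (hp1 : HasSum p 1)
    (hap : ∀ d : ℕ, (∀ k, p k ≠ 0 → d ∣ k) → d = 1) {θ : ℝ} (hθ : 0 < θ) (hθπ : θ ≤ Real.pi) :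
    0 < (1 - charFn p θ).re := by
  refine lt_of_le_of_ne (one_sub_re_nonneg hp0 hp1 θ) fun h0 => ?_
  have hs := hasSum_one_sub_re hp0 hp1 θ
  rw [← h0, hasSum_zero_iff_of_nonneg fun k =>
    mul_nonneg (hp0 k) (sub_nonneg.2 (Real.cos_le_one _))] at hs
  let H : AddSubgroup ℤ :=
    (AddSubgroup.zmultiples (2 * Real.pi)).comap (zmultiplesHom ℝ θ)
  have hmem : ∀ k : ℤ, k ∈ H ↔ ∃ j : ℤ, (j : ℝ) * (2 * Real.pi) = k * θ := by
    intro k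
    simp [H, AddSubgroup.mem_comap, AddSubgroup.mem_zmultiples_iff]
  obtain ⟨a, ha⟩ := Int.subgroup_cyclic H
  have hd := hap a.natAbs fun k hk => by
    have h1 := congrFun hs k
    simp only [Pi.zero_apply, mul_eq_zero, hk, false_or, sub_eq_zero] at h1
    have h2 : (k : ℤ) ∈ H := (hmem k).2 (by
      obtain ⟨j, hj⟩ := (Real.cos_eq_one_iff _).1 h1.symm
      exact ⟨j, by simpa using hj⟩)
    rw [ha, AddSubgroup.mem_closure_singleton] at h2
    obtain ⟨m, hm⟩ := h2
    rw [← Int.natCast_dvd_natCast, Int.natAbs_dvd]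
    exact ⟨m, by rw [← hm, smul_eq_mul, mul_comm]⟩
  have h1 : (1 : ℤ) ∈ H := by
    rw [ha, AddSubgroup.mem_closure_singleton]
    rcases Int.natAbs_eq a with h | h
    · exact ⟨1, by rw [h, hd]; simp⟩
    · exact ⟨-1, by rw [h, hd]; simp⟩
  obtain ⟨j, hj⟩ := (hmem 1).1 h1
  have hpi := Real.pi_pos
  rw [Int.cast_one, one_mul] at hj
  have hj0 : (0 : ℝ) < j := by
    by_contra hcon
    nlinarith
  have hj1 : (1 : ℝ) ≤ j := by exact_mod_cast hj0
  nlinarith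

/-- Lower bound for `Re (1 - φ)` by the contribution of `1 < θ X ≤ 2`. -/
lemma one_sub_re_ge (hp0 : ∀ k, 0 ≤ p k) (hp1 : HasSum p 1) {θ : ℝ} (hθ : 0 < θ) :
    (1 - Real.cos 1) * (Fbar p (1 / θ) - Fbar p (2 / θ)) ≤ (1 - charFn p θ).re := by
  have h1 := ((summable_tail hp0 hp1 (1 / θ)).hasSum.sub
    (summable_tail hp0 hp1 (2 / θ)).hasSum).mul_left (1 - Real.cos 1)
  refine hasSum_le (fun k => ?_) h1 (hasSum_one_sub_re hp0 hp1 θ)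
  have hc : 0 ≤ 1 - Real.cos (k * θ) := sub_nonneg.2 (Real.cos_le_one _)
  have hnn := mul_nonneg (hp0 k) hc
  have h12 : 1 / θ < 2 / θ := by gcongr; norm_num
  by_cases ha : 1 / θ < (k : ℝ)
  · by_cases hb : 2 / θ < (k : ℝ)
    · simpa only [if_pos ha, if_pos hb, sub_self, mul_zero] using hnn
    · rw [div_lt_iff₀ hθ] at ha
      rw [div_lt_iff₀ hθ, not_lt] at hb
      have : Real.cos (k * θ) ≤ Real.cos 1 :=
        Real.cos_le_cos_of_nonneg_of_le_pi zero_le_one (by linarith [Real.pi_gt_three]) ha.le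
      rw [if_pos ((div_lt_iff₀ hθ).2 ha), if_neg (by rw [div_lt_iff₀ hθ]; exact not_lt.2 hb)]
      nlinarith [hp0 k]
  · have hb : ¬ 2 / θ < (k : ℝ) := fun h => ha (h12.trans h)
    simpa only [if_neg ha, if_neg hb, sub_self, mul_zero] using hnn

/-- `Re (1 - φ(θ))` dominates the tail at `1 / θ`, uniformly on `(0, π]`. -/
lemma exists_one_sub_re_lower (hp0 : ∀ k, 0 ≤ p k) (hp1 : HasSum p 1)
    (hap : ∀ d : ℕ, (∀ k, p k ≠ 0 → d ∣ k) → d = 1) (hα : 0 < α)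
    (hreg : ∀ l : ℝ, 0 < l →
      Tendsto (fun x : ℝ => Fbar p (l * x) / Fbar p x) atTop (nhds (l ^ (-α)))) :
    ∃ c : ℝ, 0 < c ∧ ∀ θ, 0 < θ → θ ≤ Real.pi → c * Fbar p (1 / θ) ≤ (1 - charFn p θ).re := by
  have hpos := Fbar_pos hp0 hp1 hreg
  have h2α : (2 : ℝ) ^ (-α) < 1 :=
    Real.rpow_lt_one_of_one_lt_of_neg (by norm_num) (by linarith)
  set q := ((2 : ℝ) ^ (-α) + 1) / 2
  have hq1 : (2 : ℝ) ^ (-α) < q := by simp only [q]; linarith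
  have hq2 : q < 1 := by simp only [q]; linarith
  obtain ⟨N, hN⟩ := eventually_atTop.1 ((hreg 2 two_pos).eventually (gt_mem_nhds hq1))
  set M := max N 1
  have hM : 0 < M := lt_max_of_lt_right one_pos
  have hcos : Real.cos 1 < 1 := by
    have := Real.cos_lt_cos_of_nonneg_of_le_pi le_rfl (by linarith [Real.pi_gt_three]) (zero_lt_one (α := ℝ))
    simpa using this
  have hsmall : ∀ θ, 0 < θ → θ ≤ 1 / M →
      (1 - Real.cos 1) * (1 - q) * Fbar p (1 / θ) ≤ (1 - charFn p θ).re := by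
    intro θ hθ hθM
    refine le_trans ?_ (one_sub_re_ge hp0 hp1 hθ)
    have h1 : M ≤ 1 / θ := by rw [le_div_comm₀ hM hθ]; exact hθM
    have h2 := hN (1 / θ) ((le_max_left _ _).trans h1)
    rw [div_lt_iff₀ (hpos _), mul_one_div] at h2
    rw [mul_assoc]
    gcongr
    linarith
  rcases (Set.Icc (1 / M) Real.pi).eq_empty_or_nonempty with hE | hE
  · refine ⟨(1 - Real.cos 1) * (1 - q), by nlinarith, fun θ hθ hθπ => hsmall θ hθ ?_⟩
    by_contra hcon
    exact Set.notMem_empty θ (hE ▸ ⟨(not_le.1 hcon).le, hθπ⟩)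
  · obtain ⟨θ₀, hθ₀, hmin⟩ := isCompact_Icc.exists_isMinOn hE
      (f := fun θ => (1 - charFn p θ).re)
      (Complex.continuous_re.comp (continuous_const.sub (continuous_charFn hp0 hp1))).continuousOn
    have hm : 0 < (1 - charFn p θ₀).re :=
      one_sub_re_pos hp0 hp1 hap (lt_of_lt_of_le (by positivity) hθ₀.1) hθ₀.2
    refine ⟨min ((1 - Real.cos 1) * (1 - q)) (1 - charFn p θ₀).re,
      lt_min (mul_pos (by linarith) (by linarith)) hm, fun θ hθ hθπ => ?_⟩
    have hF := (hpos (1 / θ)).le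
    rcases le_total θ (1 / M) with h | h
    · refine le_trans ?_ (hsmall θ hθ h)
      gcongr
      exact min_le_left _ _
    · have h3 : (1 - charFn p θ₀).re ≤ (1 - charFn p θ).re := hmin ⟨h, hθπ⟩
      refine le_trans ?_ h3
      calc _ ≤ (1 - charFn p θ₀).re * 1 := by
            gcongr
            · exact min_le_right _ _
            · exact Fbar_le_one hp0 hp1 _
        _ = _ := mul_one _

end CharFn


/-! ### Tail integrals and the limit of the rescaled characteristic exponent -/

/-- A sequence in a complete space converges as soon as it can be approximated, up to every
positive error, by convergent sequences. -/
lemma exists_tendsto_of_approx {E : Type*} [NormedAddCommGroup E] [CompleteSpace E] (v : ℕ → E)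
    (h : ∀ ε : ℝ, 0 < ε → ∃ w : ℕ → E, (∃ l, Tendsto w atTop (𝓝 l)) ∧
      ∀ᶠ n in atTop, ‖v n - w n‖ ≤ ε) : ∃ l, Tendsto v atTop (𝓝 l) := by
  refine cauchySeq_tendsto_of_complete (Metric.cauchySeq_iff'.2 fun ε hε => ?_)
  obtain ⟨w, ⟨l, hl⟩, hw⟩ := h (ε / 5) (by positivity)
  have hl' := Metric.tendsto_nhds.1 hl (ε / 5) (by positivity)
  obtain ⟨N, hN⟩ := eventually_atTop.1 (hw.and hl')
  refine ⟨N, fun n hn => ?_⟩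
  have h1 := hN n hn
  have h2 := hN N le_rfl
  rw [← dist_eq_norm] at h1 h2
  have t1 := dist_triangle4 (v n) (w n) (w N) (v N)
  have t2 := dist_triangle (w n) l (w N)
  rw [dist_comm l] at t2
  rw [dist_comm (w N) (v N)] at t1
  linarith [h1.1, h1.2, h2.1, h2.2]

section Layer

variable {p : ℕ → ℝ} {α : ℝ}

/-- Layer cake formula: for `Ψ(y) = ∫₀ʸ ψ`, the expectation of `Ψ (min (X / n) M)` is
`∫₀ᴹ ψ(x) P(X > n x) dx`. -/
lemma hasSum_layer {E : Type*} [NormedAddCommGroup E] [NormedSpace ℝ E] [CompleteSpace E]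
    (hp0 : ∀ k, 0 ≤ p k) (hp1 : HasSum p 1) {ψ : ℝ → E} (hψ : Continuous ψ) {n M : ℝ}
    (hn : 0 < n) (hM : 0 ≤ M) :
    HasSum (fun k : ℕ => p k • ∫ x in (0 : ℝ)..(min (k / n) M), ψ x)
      (∫ x in (0 : ℝ)..M, Fbar p (n * x) • ψ x) := by
  have hψi : IntegrableOn ψ (Set.Ioc 0 M) := (hψ.integrableOn_Icc).mono_set Set.Ioc_subset_Icc_self
  have hterm : ∀ k : ℕ, (fun x : ℝ => (if n * x < (k : ℝ) then p k else 0) • ψ x) =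
      (Set.Iio ((k : ℝ) / n)).indicator (fun x => p k • ψ x) := by
    intro k
    ext x
    by_cases h : n * x < k
    · have : x ∈ Set.Iio ((k : ℝ) / n) := by
        rw [Set.mem_Iio, lt_div_iff₀ hn]; linarith
      simp [h, this]
    · have : x ∉ Set.Iio ((k : ℝ) / n) := by
        rw [Set.mem_Iio, lt_div_iff₀ hn]; linarith
      simp [h, this]
  have hint : ∀ k : ℕ, Integrable (fun x : ℝ => (if n * x < (k : ℝ) then p k else 0) • ψ x)
      (volume.restrict (Set.Ioc 0 M)) := by
    intro k
    rw [hterm]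
    exact (hψi.smul (p k)).indicator measurableSet_Iio
  have hsum : Summable fun k : ℕ =>
      ∫ x, ‖(if n * x < (k : ℝ) then p k else 0) • ψ x‖ ∂(volume.restrict (Set.Ioc 0 M)) := by
    refine Summable.of_nonneg_of_le (fun k => integral_nonneg fun x => norm_nonneg _) (fun k => ?_)
      (hp1.summable.mul_right (∫ x, ‖ψ x‖ ∂(volume.restrict (Set.Ioc 0 M))))
    rw [← integral_const_mul]
    refine integral_mono (hint k).norm (hψi.norm.const_mul _) fun x => ?_
    simp only [norm_smul]
    gcongr
    split_ifs
    · rw [Real.norm_of_nonneg (hp0 k)]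
    · simpa using hp0 k
  have h := hasSum_integral_of_summable_integral_norm hint hsum
  have hval : (fun x : ℝ => ∑' k : ℕ, (if n * x < (k : ℝ) then p k else 0) • ψ x) =
      fun x => Fbar p (n * x) • ψ x := by
    ext x
    rw [Fbar, (summable_tail hp0 hp1 (n * x)).tsum_smul_const]
  rw [hval, ← intervalIntegral.integral_of_le hM] at h
  refine h.congr_fun fun k => ?_
  have hk : (0 : ℝ) ≤ k / n := by positivity
  rw [hterm, integral_indicator measurableSet_Iio, Measure.restrict_restrict measurableSet_Iio,
    integral_smul, intervalIntegral.integral_of_le (le_min hk hM)]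
  congr 1
  rcases le_or_gt ((k : ℝ) / n) M with h' | h'
  · rw [min_eq_left h', integral_Ioc_eq_integral_Ioo]
    congr 2
    ext x
    simp only [Set.mem_inter_iff, Set.mem_Iio, Set.mem_Ioc, Set.mem_Ioo]
    constructor
    · rintro ⟨a, b⟩; exact ⟨b, a, b.le.trans h'⟩
    · rintro ⟨a, b, -⟩; exact ⟨b, a⟩
  · rw [min_eq_right h'.le]
    congr 2
    ext x
    simp only [Set.mem_inter_iff, Set.mem_Iio, Set.mem_Ioc]
    constructor
    · rintro ⟨a, b⟩; exact ⟨b.trans_lt h', a, b⟩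
    · rintro ⟨-, h⟩; exact h

lemma intervalIntegrable_rpow_neg {β : ℝ} (hβ : β < 1) (a b : ℝ) :
    IntervalIntegrable (fun x : ℝ => x ^ (-β)) volume a b :=
  intervalIntegral.intervalIntegrable_rpow' (by linarith)

/-- `E min(X / n, 1) ≤ C * P(X > n)`, written through increments of the characteristic function. -/
lemma exists_charFn_sub_le (hp0 : ∀ k, 0 ≤ p k) (hp1 : HasSum p 1) {C β : ℝ} (hC : 0 < C)
    (hβ : β < 1)
    (hpot : ∀ u v, 0 < u → u ≤ v → Fbar p u ≤ C * (v / u) ^ β * Fbar p v) :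
    ∃ K : ℝ, 0 < K ∧ ∀ n : ℝ, 0 < n → ∀ θ : ℝ,
      ‖charFn p (θ + Real.pi / n) - charFn p θ‖ ≤ K * Fbar p n := by
  have hI : ∫ x in (0 : ℝ)..1, x ^ (-β) = 1 / (1 - β) := by
    rw [integral_rpow (Or.inl (by linarith)), Real.one_rpow, Real.zero_rpow (by linarith)]
    ring
  have h1β : 0 < 1 - β := by linarith
  refine ⟨Real.pi * (C * (1 / (1 - β))), by positivity, fun n hn θ => ?_⟩
  have hlay := hasSum_layer hp0 hp1 (ψ := fun _ => (1 : ℝ)) continuous_const hn zero_le_one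
  have hle : ∫ x in (0 : ℝ)..1, Fbar p (n * x) • (1 : ℝ) ≤ C * (1 / (1 - β)) * Fbar p n := by
    have hanti : AntitoneOn (fun x => Fbar p (n * x) • (1 : ℝ)) (Set.uIcc 0 1) := by
      intro x _ y _ hxy
      simp only [smul_eq_mul, mul_one]
      exact Fbar_antitone hp0 hp1 (by gcongr)
    calc _ ≤ ∫ x in (0 : ℝ)..1, C * Fbar p n * x ^ (-β) := by
          refine intervalIntegral.integral_mono_on_of_le_Ioo zero_le_one hanti.intervalIntegrable
            ((intervalIntegrable_rpow_neg hβ _ _).const_mul _) fun x hx => ?_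
          have := hpot (n * x) n (by nlinarith [hx.1]) (by nlinarith [hx.2])
          have hx0 := hx.1
          have e : n / (n * x) = x⁻¹ := by field_simp
          rw [e, Real.inv_rpow hx0.le, ← Real.rpow_neg hx0.le] at this
          simp only [smul_eq_mul, mul_one]
          linarith
      _ = _ := by rw [intervalIntegral.integral_const_mul, hI]; ring
  have hd := ((summable_charTerm hp0 hp1 (θ + Real.pi / n)).hasSum.sub
    (summable_charTerm hp0 hp1 θ).hasSum)
  have hb : ‖charFn p (θ + Real.pi / n) - charFn p θ‖ ≤
      Real.pi * ∫ x in (0 : ℝ)..1, Fbar p (n * x) • (1 : ℝ) := by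
    unfold charFn
    rw [← hd.tsum_eq]
    refine tsum_of_norm_bounded (hlay.mul_left Real.pi) fun k => ?_
    have e1 : (p k : ℂ) * Complex.exp (((k : ℝ) * (θ + Real.pi / n) : ℝ) * Complex.I) -
        (p k : ℂ) * Complex.exp (((k : ℝ) * θ : ℝ) * Complex.I) =
        ((p k : ℂ) * Complex.exp (((k : ℝ) * θ : ℝ) * Complex.I)) *
          (Complex.exp (Complex.I * ((Real.pi * (k / n) : ℝ) : ℂ)) - 1) := by
      rw [mul_sub, mul_assoc, ← Complex.exp_add, mul_one]
      congr 3
      push_cast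
      ring
    rw [e1, norm_mul, norm_charTerm hp0]
    simp only [intervalIntegral.integral_const, smul_eq_mul, sub_zero, mul_one]
    rw [mul_left_comm]
    refine mul_le_mul_of_nonneg_left ?_ (hp0 k)
    have hk : (0 : ℝ) ≤ k / n := by positivity
    rw [mul_min_of_nonneg _ _ Real.pi_pos.le]
    refine le_min ?_ ?_
    · refine (Real.norm_exp_I_mul_ofReal_sub_one_le).trans ?_
      rw [Real.norm_of_nonneg (by positivity)]
    · refine (norm_sub_le _ _).trans ?_
      rw [mul_comm Complex.I, Complex.norm_exp_ofReal_mul_I, norm_one]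
      linarith [Real.pi_gt_three]
  refine hb.trans ?_
  rw [mul_assoc]
  gcongr

/-- For fixed `t`, the rescaled exponent `(1 - φ(t / n)) / P(X > n)` converges. The jumps are
truncated at level `n M`; the truncated part converges by dominated convergence in the layer cake
formula, and the remainder is at most `2 P(X > n M)`. -/
lemma exists_tendsto_exponent (hp0 : ∀ k, 0 ≤ p k) (hp1 : HasSum p 1) (hα : 0 < α)
    (hreg : ∀ l : ℝ, 0 < l →
      Tendsto (fun x : ℝ => Fbar p (l * x) / Fbar p x) atTop (nhds (l ^ (-α))))
    {C β : ℝ} (hC : 0 < C) (hβ : β < 1) (hβ0 : 0 < β)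
    (hpot : ∀ u v, 0 < u → u ≤ v → Fbar p u ≤ C * (v / u) ^ β * Fbar p v) (t : ℝ) :
    ∃ l : ℂ, Tendsto (fun n : ℕ => (1 - charFn p (t / n)) / (Fbar p n : ℂ)) atTop (𝓝 l) := by
  have hpos := Fbar_pos hp0 hp1 hreg
  have hanti := Fbar_antitone hp0 hp1
  refine exists_tendsto_of_approx _ fun ε hε => ?_
  have hlim0 : Tendsto (fun M : ℝ => M ^ (-α)) atTop (𝓝 0) := tendsto_rpow_neg_atTop hα
  obtain ⟨M, hM1, hMε⟩ := ((eventually_ge_atTop (1 : ℝ)).and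
    (hlim0.eventually (gt_mem_nhds (show 0 < ε / 4 by positivity)))).exists
  have hM0 : 0 < M := by linarith
  set ψ : ℝ → ℂ := fun x => -(t * Complex.I) * Complex.exp (t * Complex.I * x)
  have hψc : Continuous ψ := by fun_prop
  have hψn : ∀ x, ‖ψ x‖ = |t| := by
    intro x
    have : (t : ℂ) * Complex.I * x = ((t * x : ℝ) : ℂ) * Complex.I := by push_cast; ring
    simp only [ψ]
    rw [this, norm_mul, Complex.norm_exp_ofReal_mul_I]
    simp
  have hψI : ∀ y : ℝ, ∫ x in (0 : ℝ)..y, ψ x = 1 - Complex.exp (((y * t : ℝ) : ℂ) * Complex.I) := by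
    intro y
    have hd : ∀ x ∈ Set.uIcc 0 y,
        HasDerivAt (fun x : ℝ => - Complex.exp (t * Complex.I * x)) (ψ x) x := by
      intro x _
      have h1 : HasDerivAt (fun z : ℂ => - Complex.exp (t * Complex.I * z))
          (-(Complex.exp (t * Complex.I * x) * (t * Complex.I * 1))) (x : ℂ) :=
        (((hasDerivAt_id (x : ℂ)).const_mul (t * Complex.I)).cexp).neg
      convert h1.comp_ofReal using 1
      simp only [ψ]
      ring
    rw [intervalIntegral.integral_eq_sub_of_hasDerivAt hd (hψc.intervalIntegrable _ _)]
    simp only [Complex.ofReal_zero, mul_zero, Complex.exp_zero]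
    rw [show (t : ℂ) * Complex.I * y = ((y * t : ℝ) : ℂ) * Complex.I by push_cast; ring]
    ring
  refine ⟨fun n => ∫ x in (0 : ℝ)..M, (Fbar p (n * x) / Fbar p n) • ψ x,
    ⟨∫ x in (0 : ℝ)..M, (x ^ (-α)) • ψ x, ?_⟩, ?_⟩
  · refine intervalIntegral.tendsto_integral_filter_of_dominated_convergence
      (fun x => C * M ^ β * |t| * x ^ (-β)) ?_ ?_ ?_ ?_
    · refine Eventually.of_forall fun n => ?_
      have h1 : Measurable fun x : ℝ => Fbar p (n * x) / Fbar p n := by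
        have : Antitone fun x : ℝ => Fbar p (n * x) := fun x y hxy => hanti (by gcongr)
        exact this.measurable.div_const _
      exact (h1.aestronglyMeasurable).smul hψc.aestronglyMeasurable
    · filter_upwards [eventually_ge_atTop 1] with n hn
      refine Eventually.of_forall fun x hx => ?_
      rw [Set.uIoc_of_le hM0.le] at hx
      have hx0 := hx.1
      have hn0 : (0 : ℝ) < n := by exact_mod_cast hn
      have hFn := hpos n
      have h1 := hpot (n * x) (n * M) (by positivity) (by have := hx.2; gcongr)
      have h2 : Fbar p (n * M) ≤ Fbar p n := hanti (by nlinarith)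
      have e : (n * M) / (n * x) = M * x⁻¹ := by field_simp
      rw [e, Real.mul_rpow hM0.le (by positivity), Real.inv_rpow hx0.le,
        ← Real.rpow_neg hx0.le] at h1
      rw [norm_smul, hψn, Real.norm_of_nonneg (by have := hpos (n * x); positivity)]
      have h3 : Fbar p (n * x) / Fbar p n ≤ C * (M ^ β * x ^ (-β)) := by
        rw [div_le_iff₀ hFn]
        refine h1.trans ?_
        gcongr
      calc _ ≤ C * (M ^ β * x ^ (-β)) * |t| := by gcongr
        _ = _ := by ring
    · exact (intervalIntegrable_rpow_neg hβ _ _).const_mul _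
    · refine Eventually.of_forall fun x hx => ?_
      rw [Set.uIoc_of_le hM0.le] at hx
      have h1 := (hreg x hx.1).comp tendsto_natCast_atTop_atTop
      refine Tendsto.smul_const ?_ (ψ x)
      refine h1.congr fun n => ?_
      simp [mul_comm]
  · have h2 := (hreg M hM0).comp tendsto_natCast_atTop_atTop
    filter_upwards [eventually_ge_atTop 1, h2.eventually (gt_mem_nhds
      (show M ^ (-α) < ε / 2 by linarith))] with n hn hn2
    have hn0 : (0 : ℝ) < n := by exact_mod_cast hn
    have hFn := hpos n
    simp only [Function.comp] at hn2
    have hlay := hasSum_layer hp0 hp1 hψc hn0 hM0.le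
    have hone : HasSum (fun k => (p k : ℂ)) 1 := by
      simpa using Complex.ofRealCLM.hasSum hp1
    have hphi := hone.sub (summable_charTerm hp0 hp1 (t / n)).hasSum
    have hdiff := hphi.sub hlay
    have hbd : ‖(1 - charFn p (t / n)) - ∫ x in (0 : ℝ)..M, Fbar p (n * x) • ψ x‖ ≤
        2 * Fbar p (M * n) := by
      unfold charFn
      rw [← hdiff.tsum_eq]
      refine tsum_of_norm_bounded ((summable_tail hp0 hp1 (M * n)).hasSum.mul_left 2) fun k => ?_
      rw [hψI]
      have e1 : (p k : ℂ) - (p k : ℂ) * Complex.exp (((k : ℝ) * (t / n) : ℝ) * Complex.I) -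
          p k • (1 - Complex.exp (((min ((k : ℝ) / n) M * t : ℝ) : ℂ) * Complex.I)) =
          (p k : ℂ) * (Complex.exp (((min ((k : ℝ) / n) M * t : ℝ) : ℂ) * Complex.I) -
            Complex.exp (((k : ℝ) * (t / n) : ℝ) * Complex.I)) := by
        rw [Complex.real_smul]; ring
      rw [e1]
      split_ifs with hk
      · rw [norm_mul, Complex.norm_real, Real.norm_of_nonneg (hp0 k), mul_comm]
        refine mul_le_mul_of_nonneg_right ((norm_sub_le _ _).trans ?_) (hp0 k)
        rw [Complex.norm_exp_ofReal_mul_I, Complex.norm_exp_ofReal_mul_I]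
        norm_num
      · have : (k : ℝ) / n ≤ M := by rw [div_le_iff₀ hn0]; exact not_lt.1 hk
        rw [min_eq_left this, show (k : ℝ) / n * t = k * (t / n) by ring]
        simp
    have e2 : (1 - charFn p (t / n)) / (Fbar p n : ℂ) -
        ∫ x in (0 : ℝ)..M, (Fbar p (n * x) / Fbar p n) • ψ x =
        ((1 - charFn p (t / n)) - ∫ x in (0 : ℝ)..M, Fbar p (n * x) • ψ x) / (Fbar p n : ℂ) := by
      rw [sub_div (1 - charFn p (t / n))]
      congr 1
      rw [← intervalIntegral.integral_div]
      refine intervalIntegral.integral_congr fun x _ => ?_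
      simp only [Complex.real_smul]
      push_cast
      ring
    rw [e2, norm_div, Complex.norm_real, Real.norm_of_nonneg hFn.le, div_le_iff₀ hFn]
    rw [div_lt_iff₀ hFn] at hn2
    refine hbd.trans ?_
    nlinarith

end Layer


/-! ### Convergence of oscillatory integrals -/

section Oscillatory

/-- Shifting by the half period `π` of `exp (-i t)` turns the integral over `[A, B]` into half of
an integral of the increments of `q`, up to two boundary terms. -/
lemma norm_osc_integral_le {q : ℝ → ℂ} {A B K γ : ℝ} (hA : 1 ≤ A) (hAB : A + Real.pi ≤ B)
    (hK : 0 < K) (hγ : 1 / 2 < γ)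
    (hq : ContinuousOn q (Set.Icc A B)) (hb : ∀ t, A ≤ t → t ≤ B → ‖q t‖ ≤ 2 * K * t ^ (-γ))
    (hd : ∀ t, A ≤ t → t + Real.pi ≤ B → ‖q t - q (t + Real.pi)‖ ≤ K * t ^ (-(2 * γ))) :
    ‖∫ t in A..B, q t * Complex.exp ((-t : ℝ) * Complex.I)‖ ≤
      K / (2 * γ - 1) * A ^ (-(2 * γ - 1)) + 4 * Real.pi * K * A ^ (-γ) := by
  have hpi := Real.pi_pos
  set f : ℝ → ℂ := fun t => q t * Complex.exp ((-t : ℝ) * Complex.I) with hf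
  have hfn : ∀ t, ‖f t‖ = ‖q t‖ := fun t => by
    rw [hf]; simp only [norm_mul, Complex.norm_exp_ofReal_mul_I, mul_one]
  have hfc : ContinuousOn f (Set.Icc A B) := hq.mul (by fun_prop)
  have hint : ∀ a b, A ≤ a → a ≤ b → b ≤ B → IntervalIntegrable f volume a b := by
    intro a b ha hab hbB
    refine (hfc.mono ?_).intervalIntegrable
    rw [Set.uIcc_of_le hab]
    exact Set.Icc_subset_Icc ha hbB
  have hbd : ∀ a, A ≤ a → a + Real.pi ≤ B →
      ‖∫ t in a..(a + Real.pi), f t‖ ≤ 2 * Real.pi * K * A ^ (-γ) := by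
    intro a ha haB
    have := intervalIntegral.norm_integral_le_of_norm_le_const (a := a) (b := a + Real.pi)
      (f := f) (C := 2 * K * A ^ (-γ)) (fun t ht => by
        rw [Set.uIoc_of_le (by linarith)] at ht
        rw [hfn]
        refine (hb t (by linarith [ht.1]) (by linarith [ht.2])).trans ?_
        gcongr ?_ * ?_
        exact Real.rpow_le_rpow_of_nonpos (by linarith) (by linarith [ht.1]) (by linarith))
    refine this.trans (le_of_eq ?_)
    rw [add_sub_cancel_left, abs_of_pos hpi]
    ring
  have hshift : ∫ t in A..(B - Real.pi), f (t + Real.pi) = ∫ t in (A + Real.pi)..B, f t := by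
    rw [intervalIntegral.integral_comp_add_right]
    simp
  have hint' : IntervalIntegrable (fun t => f (t + Real.pi)) volume A (B - Real.pi) := by
    have := (hint (A + Real.pi) B (by linarith) hAB le_rfl).comp_add_right Real.pi
    simpa using this
  have hD : ∫ t in A..(B - Real.pi), (f t + f (t + Real.pi)) =
      2 * (∫ t in A..B, f t) - (∫ t in (B - Real.pi)..(B - Real.pi + Real.pi), f t) -
        ∫ t in A..(A + Real.pi), f t := by
    rw [intervalIntegral.integral_add (hint _ _ le_rfl (by linarith) (by linarith)) hint', hshift]
    have h1 := intervalIntegral.integral_add_adjacent_intervals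
      (hint A (B - Real.pi) le_rfl (by linarith) (by linarith))
      (hint (B - Real.pi) B (by linarith) (by linarith) le_rfl)
    have h2 := intervalIntegral.integral_add_adjacent_intervals
      (hint A (A + Real.pi) le_rfl (by linarith) (by linarith))
      (hint (A + Real.pi) B (by linarith) (by linarith) le_rfl)
    rw [sub_add_cancel]
    linear_combination h1 + h2
  have hDn : ‖∫ t in A..(B - Real.pi), (f t + f (t + Real.pi))‖ ≤
      K / (2 * γ - 1) * A ^ (-(2 * γ - 1)) := by
    have h0 : (0 : ℝ) ∉ Set.uIcc A (B - Real.pi) := by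
      rw [Set.uIcc_of_le (by linarith)]
      intro h
      linarith [h.1]
    have hle := intervalIntegral.norm_integral_le_of_norm_le (μ := volume) (a := A) (b := B - Real.pi)
      (f := fun t => f t + f (t + Real.pi)) (g := fun t => K * t ^ (-(2 * γ))) (by linarith)
      (Eventually.of_forall fun t ht => by
        have e : f t + f (t + Real.pi) =
            (q t - q (t + Real.pi)) * Complex.exp ((-t : ℝ) * Complex.I) := by
          have : Complex.exp ((-(t + Real.pi) : ℝ) * Complex.I) =
              - Complex.exp ((-t : ℝ) * Complex.I) := by
            rw [← Complex.exp_sub_pi_mul_I]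
            congr 1
            push_cast
            ring
          simp only [hf]
          rw [this]
          ring
        rw [e, norm_mul, Complex.norm_exp_ofReal_mul_I, mul_one]
        exact hd t ht.1.le (by linarith [ht.2]))
      ((intervalIntegral.intervalIntegrable_rpow (Or.inr h0)).const_mul K)
    refine hle.trans ?_
    rw [intervalIntegral.integral_const_mul, integral_rpow (Or.inr ⟨by linarith, h0⟩)]
    have e1 : -(2 * γ) + 1 = -(2 * γ - 1) := by ring
    rw [e1]
    have hB : 0 ≤ (B - Real.pi) ^ (-(2 * γ - 1)) := Real.rpow_nonneg (by linarith) _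
    have hg : 0 < 2 * γ - 1 := by linarith
    rw [div_mul_eq_mul_div, div_neg, ← neg_div, ← mul_div_assoc]
    gcongr
    nlinarith
  have h1 := hbd (B - Real.pi) (by linarith) (by linarith)
  have h2 := hbd A le_rfl hAB
  have h3 : ‖2 * (∫ t in A..B, f t)‖ ≤ ‖∫ t in A..(B - Real.pi), (f t + f (t + Real.pi))‖ +
      ‖∫ t in (B - Real.pi)..(B - Real.pi + Real.pi), f t‖ + ‖∫ t in A..(A + Real.pi), f t‖ := by
    rw [show 2 * (∫ t in A..B, f t) = (∫ t in A..(B - Real.pi), (f t + f (t + Real.pi))) +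
      (∫ t in (B - Real.pi)..(B - Real.pi + Real.pi), f t) + ∫ t in A..(A + Real.pi), f t by
        rw [hD]; ring]
    exact norm_add₃_le
  rw [norm_mul, Complex.norm_two] at h3
  have := norm_nonneg (∫ t in A..B, f t)
  linarith

lemma intervalIntegrable_of_bound {f : ℝ → ℂ} {B : ℝ} (hB : 0 ≤ B)
    (hf : ContinuousOn f (Set.Ioc 0 B)) {g : ℝ → ℝ} (hg : IntervalIntegrable g volume 0 B)
    (hb : ∀ t, 0 < t → t ≤ B → ‖f t‖ ≤ g t) : IntervalIntegrable f volume 0 B := by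
  rw [intervalIntegrable_iff_integrableOn_Ioc_of_le hB] at hg ⊢
  exact Integrable.mono' hg (hf.aestronglyMeasurable measurableSet_Ioc)
    ((ae_restrict_iff' measurableSet_Ioc).2 (Eventually.of_forall fun t ht => hb t ht.1 ht.2))

/-- The abstract convergence statement behind the theorem: the part of the integral over `[0, A]`
converges by dominated convergence, and the rest is small uniformly in `n` because `2 * γ > 1`. -/
lemma exists_tendsto_osc {q : ℕ → ℝ → ℂ} {K β γ : ℝ} (hK : 0 < K) (hβ : β < 1) (hγβ : γ ≤ β)
    (hγ : 1 / 2 < γ)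
    (hcont : ∀ n : ℕ, 1 ≤ n → ContinuousOn (q n) (Set.Ioc 0 (n * Real.pi)))
    (hb : ∀ n : ℕ, 1 ≤ n → ∀ t, 0 < t → t ≤ n * Real.pi → ‖q n t‖ ≤ K * (t ^ (-β) + t ^ (-γ)))
    (hd : ∀ n : ℕ, 1 ≤ n → ∀ t, 1 ≤ t → t + Real.pi ≤ n * Real.pi →
      ‖q n t - q n (t + Real.pi)‖ ≤ K * t ^ (-(2 * γ)))
    (hlim : ∀ t, 0 < t → ∃ l, Tendsto (fun n => q n t) atTop (𝓝 l)) :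
    ∃ l, Tendsto (fun n : ℕ => ∫ t in (0 : ℝ)..(n * Real.pi),
      q n t * Complex.exp ((-t : ℝ) * Complex.I)) atTop (𝓝 l) := by
  have hpi := Real.pi_pos
  choose! l hl using hlim
  have hnpi : Tendsto (fun n : ℕ => (n : ℝ) * Real.pi) atTop atTop :=
    tendsto_natCast_atTop_atTop.atTop_mul_const hpi
  have hg : ∀ a b : ℝ, IntervalIntegrable (fun t : ℝ => K * (t ^ (-β) + t ^ (-γ))) volume a b :=
    fun a b => ((intervalIntegrable_rpow_neg hβ a b).add
      (intervalIntegrable_rpow_neg (hγβ.trans_lt hβ) a b)).const_mul K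
  refine exists_tendsto_of_approx _ fun ε hε => ?_
  have h0 : Tendsto (fun A : ℝ => K / (2 * γ - 1) * A ^ (-(2 * γ - 1)) +
      4 * Real.pi * K * A ^ (-γ)) atTop (𝓝 0) := by
    have h1 := (tendsto_rpow_neg_atTop (show 0 < 2 * γ - 1 by linarith)).const_mul (K / (2 * γ - 1))
    have h2 := (tendsto_rpow_neg_atTop (show 0 < γ by linarith)).const_mul (4 * Real.pi * K)
    simpa using h1.add h2
  obtain ⟨A, hA1, hAε⟩ := ((eventually_ge_atTop (1 : ℝ)).and
    (h0.eventually (gt_mem_nhds hε))).exists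
  have hA0 : 0 < A := by linarith
  refine ⟨fun n => ∫ t in (0 : ℝ)..A, q n t * Complex.exp ((-t : ℝ) * Complex.I),
    ⟨∫ t in (0 : ℝ)..A, l t * Complex.exp ((-t : ℝ) * Complex.I), ?_⟩, ?_⟩
  · refine intervalIntegral.tendsto_integral_filter_of_dominated_convergence
      (fun t => K * (t ^ (-β) + t ^ (-γ))) ?_ ?_ (hg _ _) ?_
    · filter_upwards [eventually_ge_atTop 1, hnpi.eventually_ge_atTop A] with n hn hnA
      rw [Set.uIoc_of_le hA0.le]
      refine ContinuousOn.aestronglyMeasurable (ContinuousOn.mul ?_ (by fun_prop)) measurableSet_Ioc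
      exact (hcont n hn).mono (Set.Ioc_subset_Ioc_right hnA)
    · filter_upwards [eventually_ge_atTop 1, hnpi.eventually_ge_atTop A] with n hn hnA
      refine Eventually.of_forall fun t ht => ?_
      rw [Set.uIoc_of_le hA0.le] at ht
      rw [norm_mul, Complex.norm_exp_ofReal_mul_I, mul_one]
      exact hb n hn t ht.1 (ht.2.trans hnA)
    · refine Eventually.of_forall fun t ht => ?_
      rw [Set.uIoc_of_le hA0.le] at ht
      exact (hl t ht.1).mul_const _
  · filter_upwards [eventually_ge_atTop 1, hnpi.eventually_ge_atTop (A + Real.pi)] with n hn hnA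
    have hi : IntervalIntegrable (fun t => q n t * Complex.exp ((-t : ℝ) * Complex.I)) volume 0
        (n * Real.pi) := by
      refine intervalIntegrable_of_bound (by positivity) ((hcont n hn).mul (by fun_prop)) (hg _ _)
        fun t ht htn => ?_
      rw [norm_mul, Complex.norm_exp_ofReal_mul_I, mul_one]
      exact hb n hn t ht htn
    rw [intervalIntegral.integral_interval_sub_left hi (hi.mono_set (by
      rw [Set.uIcc_of_le (by linarith), Set.uIcc_of_le (by linarith)]
      exact Set.Icc_subset_Icc le_rfl (by linarith)))]
    refine (norm_osc_integral_le hA1 hnA hK hγ ?_ ?_ ?_).trans hAε.le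
    · exact (hcont n hn).mono fun t ht => ⟨by linarith [ht.1], ht.2⟩
    · intro t hAt htn
      refine (hb n hn t (by linarith) htn).trans ?_
      have : t ^ (-β) ≤ t ^ (-γ) :=
        Real.rpow_le_rpow_of_exponent_le (by linarith) (by linarith)
      nlinarith
    · exact fun t hAt htn => hd n hn t (by linarith) htn

end Oscillatory


/-! ### Fourier inversion for the renewal mass function -/

section Inversion

variable {p : ℕ → ℝ}

lemma convPow_nonneg (hp0 : ∀ k, 0 ≤ p k) (k x : ℕ) : 0 ≤ convPow p k x := by
  induction k generalizing x with
  | zero => simp only [convPow]; split_ifs <;> norm_num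
  | succ k ih => exact Finset.sum_nonneg fun y _ => mul_nonneg (ih y) (hp0 _)

/-- The characteristic function of `S_k` is `φ ^ k`. -/
lemma convPow_charFn (hp0 : ∀ k, 0 ≤ p k) (hp1 : HasSum p 1) (k : ℕ) (θ : ℝ) :
    Summable (convPow p k) ∧
    HasSum (fun m : ℕ => (convPow p k m : ℂ) * Complex.exp (((m : ℝ) * θ : ℝ) * Complex.I))
      (charFn p θ ^ k) := by
  have hnorm : ∀ k m, ‖(convPow p k m : ℂ) * Complex.exp (((m : ℝ) * θ : ℝ) * Complex.I)‖ =
      convPow p k m := fun k m => norm_charTerm (convPow_nonneg hp0 k) m θ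
  induction k with
  | zero =>
    refine ⟨summable_of_ne_finset_zero (s := {0}) fun b hb => ?_, ?_⟩
    · simp only [Finset.mem_singleton] at hb
      simp [convPow, hb]
    · convert hasSum_single (f := fun m : ℕ => (convPow p 0 m : ℂ) *
        Complex.exp (((m : ℝ) * θ : ℝ) * Complex.I)) 0 (fun m hm => by simp [convPow, hm]) using 1
      simp [convPow]
  | succ k ih =>
    have hs1 : Summable fun m : ℕ =>
        ‖(convPow p k m : ℂ) * Complex.exp (((m : ℝ) * θ : ℝ) * Complex.I)‖ := by
      simpa only [hnorm] using ih.1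
    have hs2 : Summable fun m : ℕ =>
        ‖(p m : ℂ) * Complex.exp (((m : ℝ) * θ : ℝ) * Complex.I)‖ := by
      simpa only [norm_charTerm hp0] using hp1.summable
    have hterm : ∀ m : ℕ, ∑ y ∈ Finset.range (m + 1),
        ((convPow p k y : ℂ) * Complex.exp (((y : ℝ) * θ : ℝ) * Complex.I)) *
        ((p (m - y) : ℂ) * Complex.exp ((((m - y : ℕ) : ℝ) * θ : ℝ) * Complex.I)) =
        (convPow p (k + 1) m : ℂ) * Complex.exp (((m : ℝ) * θ : ℝ) * Complex.I) := by
      intro m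
      simp only [convPow]
      push_cast
      rw [Finset.sum_mul]
      refine Finset.sum_congr rfl fun y hy => ?_
      have hy' : y ≤ m := by simpa [Nat.lt_succ_iff] using hy
      rw [mul_mul_mul_comm, ← Complex.exp_add]
      congr 2
      push_cast [Nat.cast_sub hy']
      ring
    have hsum := summable_norm_sum_mul_range_of_summable_norm hs1 hs2
    simp only [hterm] at hsum
    refine ⟨by simpa only [hnorm] using hsum, ?_⟩
    have h := tsum_mul_tsum_eq_tsum_sum_range_of_summable_norm hs1 hs2
    simp only [hterm] at h
    rw [ih.2.tsum_eq] at h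
    rw [pow_succ, show charFn p θ ^ k * charFn p θ = _ from h]
    exact (Summable.of_norm hsum).hasSum

lemma integral_cos_int (j : ℤ) :
    ∫ θ in (0 : ℝ)..Real.pi, Real.cos (j * θ) = if j = 0 then Real.pi else 0 := by
  split_ifs with h
  · simp [h]
  · have hj : (j : ℝ) ≠ 0 := by exact_mod_cast h
    rw [intervalIntegral.integral_comp_mul_left _ hj]
    simp [Real.sin_int_mul_pi]

lemma convPow_eq_integral (hp0 : ∀ k, 0 ≤ p k) (hp1 : HasSum p 1) (k n : ℕ) :
    ∫ θ in (0 : ℝ)..Real.pi, (charFn p θ ^ k * Complex.exp ((-(n * θ) : ℝ) * Complex.I)).re =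
      Real.pi * convPow p k n := by
  have hs := (convPow_charFn hp0 hp1 k 0).1
  have h : HasSum (fun m : ℕ => ∫ θ in (0 : ℝ)..Real.pi,
      convPow p k m * Real.cos (((m : ℤ) - n : ℤ) * θ))
      (∫ θ in (0 : ℝ)..Real.pi,
        (charFn p θ ^ k * Complex.exp ((-(n * θ) : ℝ) * Complex.I)).re) := by
    refine intervalIntegral.hasSum_integral_of_dominated_convergence
      (fun m _ => convPow p k m) (fun m => ?_) (fun m => ?_) ?_ ?_ ?_
    · exact Continuous.aestronglyMeasurable (by fun_prop)
    · refine Eventually.of_forall fun θ _ => ?_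
      rw [norm_mul, Real.norm_of_nonneg (convPow_nonneg hp0 k m)]
      exact mul_le_of_le_one_right (convPow_nonneg hp0 k m) (Real.abs_cos_le_one _)
    · exact Eventually.of_forall fun θ _ => hs
    · exact intervalIntegrable_const
    · refine Eventually.of_forall fun θ _ => ?_
      have h1 := Complex.hasSum_re (((convPow_charFn hp0 hp1 k θ).2).mul_right
        (Complex.exp ((-(n * θ) : ℝ) * Complex.I)))
      refine h1.congr_fun fun m => ?_
      rw [mul_assoc, ← Complex.exp_add, ← add_mul, ← Complex.ofReal_add, Complex.re_ofReal_mul,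
        Complex.exp_ofReal_mul_I_re]
      congr 2
      push_cast
      ring
  refine h.unique ?_
  have h2 := hasSum_single (f := fun m : ℕ => ∫ θ in (0 : ℝ)..Real.pi,
      convPow p k m * Real.cos (((m : ℤ) - n : ℤ) * θ)) n (fun m hm => by
    rw [intervalIntegral.integral_const_mul, integral_cos_int, if_neg (by omega), mul_zero])
  rw [intervalIntegral.integral_const_mul, integral_cos_int, if_pos (by omega), mul_comm] at h2
  exact h2

/-- The damped version `Σ s ^ k P(S_k = n)` of the renewal mass as a Fourier integral. -/
lemma hasSum_damped (hp0 : ∀ k, 0 ≤ p k) (hp1 : HasSum p 1) (n : ℕ) {s : ℝ} (hs0 : 0 ≤ s)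
    (hs1 : s < 1) :
    HasSum (fun k => Real.pi * (convPow p k n * s ^ k)) (∫ θ in (0 : ℝ)..Real.pi,
      ((1 - s * charFn p θ)⁻¹ * Complex.exp ((-(n * θ) : ℝ) * Complex.I)).re) := by
  have hφ := continuous_charFn hp0 hp1
  have hle : ∀ θ, ‖(s : ℂ) * charFn p θ‖ ≤ s := fun θ => by
    rw [norm_mul, Complex.norm_real, Real.norm_of_nonneg hs0]
    exact mul_le_of_le_one_right hs0 (norm_charFn_le hp0 hp1 θ)
  have h : HasSum (fun k : ℕ => ∫ θ in (0 : ℝ)..Real.pi,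
      s ^ k * (charFn p θ ^ k * Complex.exp ((-(n * θ) : ℝ) * Complex.I)).re)
      (∫ θ in (0 : ℝ)..Real.pi,
      ((1 - s * charFn p θ)⁻¹ * Complex.exp ((-(n * θ) : ℝ) * Complex.I)).re) := by
    refine intervalIntegral.hasSum_integral_of_dominated_convergence
      (fun k _ => s ^ k) (fun k => ?_) (fun k => ?_) ?_ ?_ ?_
    · refine Continuous.aestronglyMeasurable ?_
      exact continuous_const.mul (Complex.continuous_re.comp ((hφ.pow k).mul (by fun_prop)))
    · refine Eventually.of_forall fun θ _ => ?_
      rw [norm_mul, Real.norm_of_nonneg (pow_nonneg hs0 k)]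
      refine mul_le_of_le_one_right (pow_nonneg hs0 k) ((Complex.abs_re_le_norm _).trans ?_)
      rw [norm_mul, Complex.norm_exp_ofReal_mul_I, mul_one, norm_pow]
      exact pow_le_one₀ (norm_nonneg _) (norm_charFn_le hp0 hp1 θ)
    · exact Eventually.of_forall fun θ _ => summable_geometric_of_lt_one hs0 hs1
    · exact intervalIntegrable_const
    · refine Eventually.of_forall fun θ _ => ?_
      have h1 := Complex.hasSum_re ((hasSum_geometric_of_norm_lt_one
        ((hle θ).trans_lt hs1)).mul_right (Complex.exp ((-(n * θ) : ℝ) * Complex.I)))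
      refine h1.congr_fun fun k => ?_
      rw [← Complex.re_ofReal_mul, mul_pow]
      congr 1
      push_cast
      ring
  refine h.congr_fun fun k => ?_
  rw [intervalIntegral.integral_const_mul, convPow_eq_integral hp0 hp1]
  ring

/-- Fourier inversion: `π P(S_k = n)` sums over `k` to `∫₀^π Re (exp (-i n θ) / (1 - φ(θ))) dθ`,
by letting the damping parameter tend to `1` (Abel summation with nonnegative terms). -/
lemma hasSum_renewal (hp0 : ∀ k, 0 ≤ p k) (hp1 : HasSum p 1) {g : ℝ → ℝ}
    (hg : IntervalIntegrable g volume 0 Real.pi)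
    (hpos : ∀ θ, 0 < θ → θ ≤ Real.pi → 0 < (1 - charFn p θ).re)
    (hbd : ∀ θ, 0 < θ → θ ≤ Real.pi → ((1 - charFn p θ).re)⁻¹ ≤ g θ) (n : ℕ) :
    HasSum (fun k => convPow p k n) (Real.pi⁻¹ * ∫ θ in (0 : ℝ)..Real.pi,
      ((1 - charFn p θ)⁻¹ * Complex.exp ((-(n * θ) : ℝ) * Complex.I)).re) := by
  have hpi := Real.pi_pos
  have hφ := continuous_charFn hp0 hp1
  set I := Real.pi⁻¹ * ∫ θ in (0 : ℝ)..Real.pi,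
      ((1 - charFn p θ)⁻¹ * Complex.exp ((-(n * θ) : ℝ) * Complex.I)).re
  have hev : ∀ᶠ s : ℝ in 𝓝[<] 1, 1 / 2 ≤ s ∧ s < 1 := by
    have h1 : ∀ᶠ s : ℝ in 𝓝[<] 1, 1 / 2 < s :=
      nhdsWithin_le_nhds (lt_mem_nhds (by norm_num))
    filter_upwards [h1, self_mem_nhdsWithin] with s hs hs1
    exact ⟨hs.le, hs1⟩
  have hre : ∀ s θ : ℝ, 1 / 2 ≤ s → s < 1 →
      1 / 2 * (1 - charFn p θ).re ≤ (1 - s * charFn p θ).re := by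
    intro s θ hs hs1
    have h0 := one_sub_re_nonneg hp0 hp1 θ
    simp only [Complex.sub_re, Complex.re_ofReal_mul, Complex.one_re] at h0 ⊢
    nlinarith
  have hlim : Tendsto (fun s : ℝ => Real.pi⁻¹ * ∫ θ in (0 : ℝ)..Real.pi,
      ((1 - s * charFn p θ)⁻¹ * Complex.exp ((-(n * θ) : ℝ) * Complex.I)).re)
      (𝓝[<] 1) (𝓝 I) := by
    refine Tendsto.const_mul _ ?_
    refine intervalIntegral.tendsto_integral_filter_of_dominated_convergence
      (fun θ => 2 * g θ) ?_ ?_ (hg.const_mul 2) ?_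
    · filter_upwards [hev] with s hs
      have hm : Measurable fun θ => (1 - s * charFn p θ)⁻¹ *
          Complex.exp ((-(n * θ) : ℝ) * Complex.I) :=
        ((continuous_const.sub (continuous_const.mul hφ)).measurable.inv).mul
          (Continuous.measurable (by fun_prop))
      exact (Complex.measurable_re.comp hm).aestronglyMeasurable
    · filter_upwards [hev] with s hs
      refine Eventually.of_forall fun θ hθ => ?_
      rw [Set.uIoc_of_le hpi.le] at hθ
      refine (Complex.abs_re_le_norm _).trans ?_
      rw [norm_mul, Complex.norm_exp_ofReal_mul_I, mul_one, norm_inv]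
      have h1 := hpos θ hθ.1 hθ.2
      have h2 := hre s θ hs.1 hs.2
      calc ‖1 - s * charFn p θ‖⁻¹ ≤ (1 / 2 * (1 - charFn p θ).re)⁻¹ := by
            gcongr
            exact h2.trans (Complex.re_le_norm _)
        _ = 2 * ((1 - charFn p θ).re)⁻¹ := by rw [mul_inv]; norm_num
        _ ≤ _ := by gcongr; exact hbd θ hθ.1 hθ.2
    · refine Eventually.of_forall fun θ hθ => ?_
      rw [Set.uIoc_of_le hpi.le] at hθ
      refine (Complex.continuous_re.tendsto _).comp (Tendsto.mul_const _ ?_)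
      refine Tendsto.inv₀ ?_ ?_
      · have : Continuous fun s : ℝ => 1 - (s : ℂ) * charFn p θ := by fun_prop
        have h := this.tendsto 1
        simp only [Complex.ofReal_one, one_mul] at h
        exact h.mono_left nhdsWithin_le_nhds
      · intro h0
        have := hpos θ hθ.1 hθ.2
        rw [h0] at this
        simp at this
  have hS : ∀ᶠ s : ℝ in 𝓝[<] 1, HasSum (fun k => convPow p k n * s ^ k)
      (Real.pi⁻¹ * ∫ θ in (0 : ℝ)..Real.pi,
      ((1 - s * charFn p θ)⁻¹ * Complex.exp ((-(n * θ) : ℝ) * Complex.I)).re) := by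
    filter_upwards [hev] with s hs
    have := (hasSum_damped hp0 hp1 n (by linarith [hs.1]) hs.2).mul_left Real.pi⁻¹
    refine this.congr_fun fun k => ?_
    field_simp
  have hsummable : Summable fun k => convPow p k n := by
    refine summable_of_sum_range_le (c := I) (fun k => convPow_nonneg hp0 k n) fun N => ?_
    have h1 : Tendsto (fun s : ℝ => ∑ k ∈ Finset.range N, convPow p k n * s ^ k) (𝓝[<] 1)
        (𝓝 (∑ k ∈ Finset.range N, convPow p k n)) := by
      have : Continuous fun s : ℝ => ∑ k ∈ Finset.range N, convPow p k n * s ^ k := by fun_prop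
      have h := this.tendsto 1
      simp only [one_pow, mul_one] at h
      exact h.mono_left nhdsWithin_le_nhds
    refine le_of_tendsto_of_tendsto h1 hlim ?_
    filter_upwards [hS, hev] with s hs hs'
    refine sum_le_hasSum _ (fun k _ => mul_nonneg (convPow_nonneg hp0 k n) ?_) hs
    exact pow_nonneg (by linarith [hs'.1]) k
  have habel := Real.tendsto_tsum_powerSeries_nhdsWithin_lt hsummable.hasSum.tendsto_sum_nat
  have heq : ∑' k, convPow p k n = I := by
    refine tendsto_nhds_unique habel (hlim.congr' ?_)
    filter_upwards [hS] with s hs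
    exact hs.tsum_eq.symm
  exact heq ▸ hsummable.hasSum

end Inversion


/-! ### Positivity of the limit -/

section Positivity

variable {p : ℕ → ℝ}

lemma Fbar_natCast (hp0 : ∀ k, 0 ≤ p k) (hp1 : HasSum p 1) (m : ℕ) :
    Fbar p m = 1 - ∑ k ∈ Finset.range (m + 1), p k := by
  have h1 := (summable_tail hp0 hp1 m).sum_add_tsum_nat_add (m + 1)
  have h2 := hp1.summable.sum_add_tsum_nat_add (m + 1)
  rw [hp1.tsum_eq] at h2
  have h3 : ∑ k ∈ Finset.range (m + 1), (if (m : ℝ) < (k : ℝ) then p k else 0) = 0 := by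
    refine Finset.sum_eq_zero fun k hk => if_neg ?_
    have : k ≤ m := by simpa [Nat.lt_succ_iff] using hk
    exact not_lt.2 (by exact_mod_cast this)
  have h4 : ∑' k : ℕ, (if (m : ℝ) < ((k + (m + 1) : ℕ) : ℝ) then p (k + (m + 1)) else 0) =
      ∑' k : ℕ, p (k + (m + 1)) :=
    tsum_congr fun k => if_pos (by exact_mod_cast (by omega : m < k + (m + 1)))
  rw [h3, h4, zero_add] at h1
  rw [Fbar, ← h1]
  linarith

lemma tendsto_Fbar_natCast (hp0 : ∀ k, 0 ≤ p k) (hp1 : HasSum p 1) :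
    Tendsto (fun m : ℕ => Fbar p m) atTop (𝓝 0) := by
  have h := (hp1.tendsto_sum_nat.comp (tendsto_add_atTop_nat 1)).const_sub 1
  rw [sub_self] at h
  exact h.congr fun m => (Fbar_natCast hp0 hp1 m).symm

lemma renewalMass_nonneg (hp0 : ∀ k, 0 ≤ p k) (x : ℕ) : 0 ≤ renewalMass p x :=
  tsum_nonneg fun k => convPow_nonneg hp0 k x

lemma renewalMass_eq (hs : ∀ x, Summable fun k => convPow p k x) (x : ℕ) :
    renewalMass p x = (if x = 0 then 1 else 0) +
      ∑ y ∈ Finset.range (x + 1), renewalMass p y * p (x - y) := by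
  rw [renewalMass, (hs x).tsum_eq_zero_add]
  congr 1
  simp only [convPow]
  rw [Summable.tsum_finsetSum fun y _ => (hs y).mul_right _]
  exact Finset.sum_congr rfl fun y _ => tsum_mul_right

/-- Decomposition at the last renewal before `N`. -/
lemma sum_renewal_tail (hp0 : ∀ k, 0 ≤ p k) (hp1 : HasSum p 1)
    (hs : ∀ x, Summable fun k => convPow p k x) (N : ℕ) :
    ∑ y ∈ Finset.range (N + 1), renewalMass p y * Fbar p ((N - y : ℕ) : ℝ) = 1 := by
  have h0 : Fbar p ((0 : ℕ) : ℝ) = 1 - p 0 := by rw [Fbar_natCast hp0 hp1]; simp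
  induction N with
  | zero =>
    have h := renewalMass_eq hs 0
    simp only [if_true, zero_add, Finset.sum_range_one, Nat.sub_self] at h ⊢
    rw [h0]
    linarith
  | succ N ih =>
    have h := renewalMass_eq hs (N + 1)
    rw [Finset.sum_range_succ] at h ⊢
    simp only [Nat.sub_self, Nat.add_eq_zero_iff, one_ne_zero, and_false, if_false, zero_add] at h ⊢
    have e : ∑ y ∈ Finset.range (N + 1), renewalMass p y * Fbar p ((N + 1 - y : ℕ) : ℝ) =
        ∑ y ∈ Finset.range (N + 1), renewalMass p y * Fbar p ((N - y : ℕ) : ℝ) -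
        ∑ y ∈ Finset.range (N + 1), renewalMass p y * p (N + 1 - y) := by
      rw [← Finset.sum_sub_distrib]
      refine Finset.sum_congr rfl fun y hy => ?_
      have hy' : y ≤ N := by simpa [Nat.lt_succ_iff] using hy
      rw [Nat.succ_sub hy', Fbar_natCast hp0 hp1, Fbar_natCast hp0 hp1, Finset.sum_range_succ _ (N - y + 1)]
      simp only [Nat.succ_eq_add_one]
      ring
    rw [e, ih, h0]
    linarith

/-- Summing the last renewal decomposition gives a lower bound for the renewal function. -/
lemma le_renewal_mul_tail (hp0 : ∀ k, 0 ≤ p k) (hp1 : HasSum p 1)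
    (hs : ∀ x, Summable fun k => convPow p k x) (N : ℕ) :
    (N : ℝ) + 1 ≤ (∑ y ∈ Finset.range (N + 1), renewalMass p y) *
      ∑ z ∈ Finset.range (N + 1), Fbar p (z : ℝ) := by
  have h1 : (N : ℝ) + 1 = ∑ x ∈ Finset.range (N + 1), ∑ y ∈ Finset.range (x + 1),
      renewalMass p y * Fbar p ((x - y : ℕ) : ℝ) := by
    simp [sum_renewal_tail hp0 hp1 hs]
  rw [h1, Finset.sum_range_diag_flip (N + 1) fun y z => renewalMass p y * Fbar p (z : ℝ),
    Finset.sum_mul]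
  refine Finset.sum_le_sum fun y _ => ?_
  rw [← Finset.mul_sum]
  refine mul_le_mul_of_nonneg_left ?_ (renewalMass_nonneg hp0 y)
  exact Finset.sum_le_sum_of_subset_of_nonneg (Finset.range_subset_range.2 (Nat.sub_le _ _))
    fun z _ _ => Fbar_nonneg hp0 _

lemma sum_rpow_le {a : ℝ} (ha : 0 < a) (ha1 : a ≤ 1) (N : ℕ) :
    ∑ i ∈ Finset.range N, ((i : ℝ) + 1) ^ (a - 1) ≤ (N : ℝ) ^ a / a := by
  induction N with
  | zero => simp [Real.zero_rpow ha.ne']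
  | succ N ih =>
    rw [Finset.sum_range_succ]
    have hN : (0 : ℝ) < (N : ℝ) + 1 := by positivity
    have hb := rpow_one_add_le_one_add_mul_self (s := -1 / ((N : ℝ) + 1)) (by
      rw [le_div_iff₀ hN]; linarith [Nat.cast_nonneg (α := ℝ) N]) ha.le ha1
    have e : 1 + -1 / ((N : ℝ) + 1) = N / (N + 1) := by field_simp; ring
    rw [e, Real.div_rpow (by positivity) hN.le, div_le_iff₀ (by positivity)] at hb
    have e2 : ((N : ℝ) + 1) ^ (a - 1) = ((N : ℝ) + 1) ^ a / (N + 1) := Real.rpow_sub_one hN.ne' a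
    push_cast
    calc _ ≤ (N : ℝ) ^ a / a + ((N : ℝ) + 1) ^ (a - 1) := by linarith
      _ ≤ (1 + a * (-1 / ((N : ℝ) + 1))) * ((N : ℝ) + 1) ^ a / a +
          ((N : ℝ) + 1) ^ (a - 1) := by gcongr
      _ = _ := by rw [e2]; field_simp; ring

/-- If `x P(X > x) g(x)` tended to `0`, the renewal function would be `o(1 / P(X > N))`, against
the lower bound `le_renewal_mul_tail`. -/
lemma not_tendsto_zero (hp0 : ∀ k, 0 ≤ p k) (hp1 : HasSum p 1) (hpos : ∀ x, 0 < Fbar p x)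
    (hs : ∀ x, Summable fun k => convPow p k x)
    {C β : ℝ} (hC : 0 < C) (hβ : β < 1) (hβ0 : 0 < β)
    (hup : ∀ u v, 0 < u → u ≤ v → Fbar p u ≤ C * (v / u) ^ β * Fbar p v)
    {D γ : ℝ} (hD : 0 < D) (hγ : γ < 1) (hγ0 : 0 < γ)
    (hdown : ∀ u v, 1 ≤ u → u ≤ v → Fbar p v ≤ D * (u / v) ^ γ * Fbar p u) :
    ¬ Tendsto (fun x : ℕ => (x : ℝ) * Fbar p x * renewalMass p x) atTop (𝓝 0) := by
  intro hlim
  have h1β : 0 < 1 - β := by linarith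
  have hF1 := hpos 1
  -- `∑_{z ≤ N} P(X > z) ≤ K N P(X > N)`
  obtain ⟨K, hK, hV⟩ : ∃ K : ℝ, 0 < K ∧ ∀ N : ℕ, 1 ≤ N →
      ∑ z ∈ Finset.range (N + 1), Fbar p (z : ℝ) ≤ K * N * Fbar p N := by
    refine ⟨C / (1 - β) + C / Fbar p 1, by positivity, fun N hN => ?_⟩
    have hN1 : (1 : ℝ) ≤ N := by exact_mod_cast hN
    have hN0 : (0 : ℝ) < N := by linarith
    have hFN := hpos N
    rw [Finset.sum_range_succ']
    have ha : ∑ z ∈ Finset.range N, Fbar p ((z + 1 : ℕ) : ℝ) ≤ C / (1 - β) * N * Fbar p N := by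
      calc _ ≤ ∑ z ∈ Finset.range N, C * Fbar p N * N ^ β * ((z : ℝ) + 1) ^ ((1 - β) - 1) := by
            refine Finset.sum_le_sum fun z hz => ?_
            have hz' : ((z : ℝ) + 1) ≤ N := by
              exact_mod_cast Nat.succ_le_of_lt (Finset.mem_range.1 hz)
            have hz0 : (0 : ℝ) < (z : ℝ) + 1 := by positivity
            have := hup ((z : ℝ) + 1) N hz0 hz'
            rw [Real.div_rpow hN0.le hz0.le] at this
            push_cast
            refine this.trans (le_of_eq ?_)
            rw [show (1 - β) - 1 = -β by ring, Real.rpow_neg hz0.le]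
            ring
        _ ≤ C * Fbar p N * N ^ β * ((N : ℝ) ^ (1 - β) / (1 - β)) := by
            rw [← Finset.mul_sum]
            gcongr
            exact sum_rpow_le h1β (by linarith) N
        _ = C / (1 - β) * (N ^ β * (N : ℝ) ^ (1 - β)) * Fbar p N := by ring
        _ = _ := by rw [← Real.rpow_add hN0]; simp
    have hb : Fbar p ((0 : ℕ) : ℝ) ≤ C / Fbar p 1 * N * Fbar p N := by
      refine (Fbar_le_one hp0 hp1 _).trans ?_
      have := hup 1 N one_pos hN1
      rw [div_one] at this
      have hNβ : (N : ℝ) ^ β ≤ N := by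
        calc (N : ℝ) ^ β ≤ (N : ℝ) ^ (1 : ℝ) := Real.rpow_le_rpow_of_exponent_le hN1 hβ.le
          _ = N := Real.rpow_one _
      calc (1 : ℝ) = Fbar p 1 / Fbar p 1 := by field_simp
        _ ≤ C * N * Fbar p N / Fbar p 1 := by
            gcongr
            refine this.trans ?_
            gcongr
        _ = _ := by ring
    linarith
  -- `∑_{1 ≤ y ≤ N} 1 / (y P(X > y)) ≤ D / γ / P(X > N)`
  have hW : ∀ N : ℕ, 1 ≤ N → ∑ i ∈ Finset.range N, (((i : ℝ) + 1) * Fbar p ((i : ℝ) + 1))⁻¹ ≤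
      D / γ / Fbar p N := by
    intro N hN
    have hN1 : (1 : ℝ) ≤ N := by exact_mod_cast hN
    have hN0 : (0 : ℝ) < N := by linarith
    have hFN := hpos N
    calc _ ≤ ∑ i ∈ Finset.range N, D / Fbar p N / N ^ γ * ((i : ℝ) + 1) ^ (γ - 1) := by
          refine Finset.sum_le_sum fun z hz => ?_
          have hz' : ((z : ℝ) + 1) ≤ N := by
            exact_mod_cast Nat.succ_le_of_lt (Finset.mem_range.1 hz)
          have hz0 : (0 : ℝ) < (z : ℝ) + 1 := by positivity
          have hFz := hpos ((z : ℝ) + 1)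
          have := hdown ((z : ℝ) + 1) N (by linarith [Nat.cast_nonneg (α := ℝ) z]) hz'
          rw [Real.div_rpow hz0.le hN0.le] at this
          rw [Real.rpow_sub_one hz0.ne', mul_inv, inv_mul_eq_div, mul_div_assoc']
          gcongr
          rw [inv_le_iff_one_le_mul₀ hFz]
          calc 1 = Fbar p N / Fbar p N := by field_simp
            _ ≤ (D * (((z : ℝ) + 1) ^ γ / N ^ γ) * Fbar p (z + 1)) / Fbar p N := by gcongr
            _ = _ := by ring
      _ ≤ D / Fbar p N / N ^ γ * ((N : ℝ) ^ γ / γ) := by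
          rw [← Finset.mul_sum]
          gcongr
          exact sum_rpow_le hγ0 hγ.le N
      _ = _ := by
          have : (N : ℝ) ^ γ ≠ 0 := by positivity
          field_simp
  set ε := γ / (4 * D * K) with hε
  have hεpos : 0 < ε := by positivity
  obtain ⟨x₀, hx₀⟩ := eventually_atTop.1 (hlim.eventually (gt_mem_nhds hεpos))
  set B := ∑ y ∈ Finset.range (x₀ + 1), renewalMass p y with hB
  have hB0 : 0 ≤ B := Finset.sum_nonneg fun y _ => renewalMass_nonneg hp0 y
  have hU : ∀ N : ℕ, ∑ y ∈ Finset.range (N + 1), renewalMass p y ≤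
      B + ε * ∑ i ∈ Finset.range N, (((i : ℝ) + 1) * Fbar p ((i : ℝ) + 1))⁻¹ := by
    intro N
    have hnn : ∀ i : ℕ, 0 ≤ (((i : ℝ) + 1) * Fbar p ((i : ℝ) + 1))⁻¹ := fun i => by
      have := hpos ((i : ℝ) + 1)
      positivity
    induction N with
    | zero =>
      simp only [Finset.range_zero, Finset.sum_empty, mul_zero, add_zero]
      exact Finset.sum_le_sum_of_subset_of_nonneg (Finset.range_subset_range.2 (by omega))
        fun y _ _ => renewalMass_nonneg hp0 y
    | succ N ih =>
      rcases lt_or_ge N x₀ with h | h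
      · refine le_add_of_le_of_nonneg ?_ (mul_nonneg hεpos.le (Finset.sum_nonneg fun i _ => hnn i))
        exact Finset.sum_le_sum_of_subset_of_nonneg (Finset.range_subset_range.2 (by omega))
          fun y _ _ => renewalMass_nonneg hp0 y
      · rw [Finset.sum_range_succ, Finset.sum_range_succ (fun i : ℕ => (((i : ℝ) + 1) * _)⁻¹)]
        have h1 := hx₀ (N + 1) (by omega)
        push_cast at h1
        have hF := hpos ((N : ℝ) + 1)
        have h2 : renewalMass p (N + 1) ≤ ε * (((N : ℝ) + 1) * Fbar p ((N : ℝ) + 1))⁻¹ := by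
          rw [← div_eq_mul_inv, le_div_iff₀ (by positivity), mul_comm]
          exact h1.le
        linarith
  have hF0 := tendsto_Fbar_natCast hp0 hp1
  have hBK : 0 < 1 / (4 * (B + 1) * K) := by positivity
  obtain ⟨N, hN1, hN2⟩ := ((eventually_ge_atTop 1).and
    (hF0.eventually (gt_mem_nhds hBK))).exists
  have hN0 : (0 : ℝ) < N := by exact_mod_cast hN1
  have hFN := hpos N
  have hmain := le_renewal_mul_tail hp0 hp1 hs N
  have h1 : (N : ℝ) + 1 ≤ (B + ε * (D / γ / Fbar p N)) * (K * N * Fbar p N) := by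
    refine hmain.trans ?_
    refine mul_le_mul ((hU N).trans ?_) (hV N hN1) (Finset.sum_nonneg fun z _ => (hpos _).le)
      (by positivity)
    gcongr
    exact hW N hN1
  have h2 : (B + ε * (D / γ / Fbar p N)) * (K * N * Fbar p N) =
      N * (B * K * Fbar p N + 1 / 4) := by
    rw [hε]
    field_simp
  rw [lt_div_iff₀ (by positivity)] at hN2
  have h3 : B * K * Fbar p N ≤ 1 / 4 := by nlinarith
  rw [h2] at h1
  nlinarith

end Positivity


/-! ### The strong renewal theorem -/

section Main

variable {p : ℕ → ℝ} {α : ℝ}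

/-- Existence of the limit (possibly zero), together with the summability that makes
`renewalMass` meaningful. -/
lemma exists_limit (hp0 : ∀ k, 0 ≤ p k) (hp1 : HasSum p 1)
    (hap : ∀ d : ℕ, (∀ k, p k ≠ 0 → d ∣ k) → d = 1) (hα : 0 < α)
    (hreg : ∀ l : ℝ, 0 < l →
      Tendsto (fun x : ℝ => Fbar p (l * x) / Fbar p x) atTop (nhds (l ^ (-α))))
    {C β : ℝ} (hC : 0 < C) (hβ : β < 1) (hβ0 : 0 < β)
    (hup : ∀ u v, 0 < u → u ≤ v → Fbar p u ≤ C * (v / u) ^ β * Fbar p v)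
    {D γ : ℝ} (hD : 0 < D) (hγβ : γ ≤ β) (hγ : 1 / 2 < γ)
    (hdown : ∀ u v, 1 / Real.pi ≤ u → u ≤ v → Fbar p v ≤ D * (u / v) ^ γ * Fbar p u) :
    (∀ x, Summable fun k => convPow p k x) ∧
    ∃ L : ℝ, Tendsto (fun x : ℕ => (x : ℝ) * Fbar p x * renewalMass p x) atTop (nhds L) := by
  have hpi := Real.pi_pos
  have hpos := Fbar_pos hp0 hp1 hreg
  have hφ := continuous_charFn hp0 hp1
  obtain ⟨c, hc, hlow⟩ := exists_one_sub_re_lower hp0 hp1 hap hα hreg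
  obtain ⟨K₀, hK₀, hinc⟩ := exists_charFn_sub_le hp0 hp1 hC hβ hup
  have hrepos : ∀ θ, 0 < θ → θ ≤ Real.pi → 0 < (1 - charFn p θ).re := fun θ h0 h1 =>
    lt_of_lt_of_le (mul_pos hc (hpos _)) (hlow θ h0 h1)
  have hne : ∀ θ, 0 < θ → θ ≤ Real.pi → 1 - charFn p θ ≠ 0 := fun θ h0 h1 h => by
    have := hrepos θ h0 h1
    rw [h] at this
    simp at this
  -- the basic bound on the rescaled resolvent, in terms of the real part of `1 - φ`
  have hre : ∀ n : ℝ, 1 ≤ n → ∀ t, 0 < t → t ≤ n * Real.pi →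
      Fbar p n * ((1 - charFn p (t / n)).re)⁻¹ ≤ (C + D) / c * (t ^ (-β) + t ^ (-γ)) ∧
      (1 ≤ t → Fbar p n * ((1 - charFn p (t / n)).re)⁻¹ ≤ (C + D) / c * t ^ (-γ)) := by
    intro n hn t ht htn
    have hn0 : 0 < n := by linarith
    have htn0 : 0 < t / n := by positivity
    have htnpi : t / n ≤ Real.pi := by rw [div_le_iff₀ hn0]; linarith
    have hl := hlow (t / n) htn0 htnpi
    rw [one_div_div] at hl
    have hFt := hpos (n / t)
    have hFn := hpos n
    have hb1 : 0 ≤ t ^ (-β) := Real.rpow_nonneg ht.le _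
    have hg1 : 0 ≤ t ^ (-γ) := Real.rpow_nonneg ht.le _
    have hred : ∀ X : ℝ, Fbar p n ≤ (C + D) * X * Fbar p (n / t) →
        Fbar p n * ((1 - charFn p (t / n)).re)⁻¹ ≤ (C + D) / c * X := by
      intro X hX
      calc _ ≤ Fbar p n * (c * Fbar p (n / t))⁻¹ := by gcongr
        _ ≤ (C + D) * X * Fbar p (n / t) * (c * Fbar p (n / t))⁻¹ := by gcongr
        _ = _ := by field_simp
    have hbig : 1 ≤ t → Fbar p n ≤ (C + D) * t ^ (-γ) * Fbar p (n / t) := by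
      intro h1
      have := hdown (n / t) n (by
        rw [div_le_div_iff₀ hpi ht]; linarith) (div_le_self hn0.le h1)
      have e : n / t / n = t⁻¹ := by field_simp
      rw [e, Real.inv_rpow ht.le, ← Real.rpow_neg ht.le] at this
      refine this.trans ?_
      gcongr
      linarith
    refine ⟨hred _ ?_, fun h1 => hred _ (hbig h1)⟩
    rcases le_total 1 t with h1 | h1
    · refine (hbig h1).trans ?_
      gcongr
      linarith
    · have := hup n (n / t) hn0 (by rw [le_div_iff₀ ht]; nlinarith)
      have e : n / t / n = t⁻¹ := by field_simp
      rw [e, Real.inv_rpow ht.le, ← Real.rpow_neg ht.le] at this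
      refine this.trans ?_
      gcongr
      · linarith
      · linarith
  have hpowint : ∀ a b : ℝ, IntervalIntegrable
      (fun t : ℝ => (C + D) / c * (t ^ (-β) + t ^ (-γ))) volume a b :=
    fun a b => ((intervalIntegrable_rpow_neg hβ a b).add
      (intervalIntegrable_rpow_neg (hγβ.trans_lt hβ) a b)).const_mul _
  have hF1 := hpos 1
  have hinv : ∀ n : ℕ, HasSum (fun k => convPow p k n) (Real.pi⁻¹ * ∫ θ in (0 : ℝ)..Real.pi,
      ((1 - charFn p θ)⁻¹ * Complex.exp ((-(n * θ) : ℝ) * Complex.I)).re) := by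
    refine hasSum_renewal hp0 hp1 ((hpowint 0 Real.pi).const_mul (Fbar p 1)⁻¹) hrepos ?_
    intro θ h0 h1
    have := (hre 1 le_rfl θ h0 (by linarith)).1
    rw [div_one] at this
    rw [inv_mul_eq_div, le_div_iff₀ hF1, mul_comm]
    exact this
  refine ⟨fun x => (hinv x).summable, ?_⟩
  set q : ℕ → ℝ → ℂ := fun n t => (Fbar p n : ℂ) * (1 - charFn p (t / n))⁻¹ with hq
  have hqn : ∀ n t, 0 < (1 - charFn p (t / (n : ℕ))).re →
      ‖q n t‖ ≤ Fbar p n * ((1 - charFn p (t / n)).re)⁻¹ := by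
    intro n t h
    have hFn := hpos n
    simp only [hq]
    rw [norm_mul, norm_inv, Complex.norm_real, Real.norm_of_nonneg hFn.le]
    gcongr
    exact Complex.re_le_norm _
  have hrange : ∀ n : ℕ, 1 ≤ n → ∀ t : ℝ, 0 < t → t ≤ n * Real.pi →
      0 < t / n ∧ t / n ≤ Real.pi := by
    intro n hn t ht htn
    have hn0 : (0 : ℝ) < n := by exact_mod_cast hn
    exact ⟨by positivity, by rw [div_le_iff₀ hn0]; linarith⟩
  have hcont : ∀ n : ℕ, 1 ≤ n → ContinuousOn (q n) (Set.Ioc 0 (n * Real.pi)) := by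
    intro n hn
    refine continuousOn_const.mul (ContinuousOn.inv₀ ?_ ?_)
    · exact (continuous_const.sub (hφ.comp (continuous_id.div_const _))).continuousOn
    · intro t ht
      obtain ⟨h1, h2⟩ := hrange n hn t ht.1 ht.2
      exact hne _ h1 h2
  set K := max ((C + D) / c) (K₀ * ((C + D) / c) ^ 2) with hK
  have hKpos : 0 < K := lt_max_of_lt_left (by positivity)
  have hb : ∀ n : ℕ, 1 ≤ n → ∀ t, 0 < t → t ≤ n * Real.pi →
      ‖q n t‖ ≤ K * (t ^ (-β) + t ^ (-γ)) := by
    intro n hn t ht htn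
    obtain ⟨h1, h2⟩ := hrange n hn t ht htn
    refine (hqn n t (hrepos _ h1 h2)).trans ((hre n (by exact_mod_cast hn) t ht htn).1.trans ?_)
    have hb1 : 0 ≤ t ^ (-β) := Real.rpow_nonneg ht.le _
    have hg1 : 0 ≤ t ^ (-γ) := Real.rpow_nonneg ht.le _
    gcongr
    exact le_max_left _ _
  have hd : ∀ n : ℕ, 1 ≤ n → ∀ t, 1 ≤ t → t + Real.pi ≤ n * Real.pi →
      ‖q n t - q n (t + Real.pi)‖ ≤ K * t ^ (-(2 * γ)) := by
    intro n hn t ht htn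
    have ht0 : 0 < t := by linarith
    have hn1 : (1 : ℝ) ≤ n := by exact_mod_cast hn
    have hn0 : (0 : ℝ) < n := by linarith
    obtain ⟨h1, h2⟩ := hrange n hn t ht0 (by linarith)
    obtain ⟨h3, h4⟩ := hrange n hn (t + Real.pi) (by linarith) htn
    have hFn := hpos n
    have hx := hne _ h1 h2
    have hy := hne _ h3 h4
    have hFc : (Fbar p n : ℂ) ≠ 0 := by exact_mod_cast hFn.ne'
    have e : q n t - q n (t + Real.pi) = q n t * q n (t + Real.pi) *
        ((charFn p (t / n) - charFn p (t / n + Real.pi / n)) / (Fbar p n : ℂ)) := by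
      rw [← add_div]
      simp only [hq]
      field_simp
      ring
    have hg1 : 0 ≤ t ^ (-γ) := Real.rpow_nonneg ht0.le _
    have hA : ‖q n t‖ ≤ (C + D) / c * t ^ (-γ) :=
      (hqn n t (hrepos _ h1 h2)).trans ((hre n hn1 t ht0 (by linarith)).2 ht)
    have hB : ‖q n (t + Real.pi)‖ ≤ (C + D) / c * t ^ (-γ) := by
      refine (hqn n _ (hrepos _ h3 h4)).trans
        (((hre n hn1 (t + Real.pi) (by linarith) htn).2 (by linarith)).trans ?_)
      gcongr ?_ * ?_
      exact Real.rpow_le_rpow_of_nonpos ht0 (by linarith) (by linarith)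
    have hI : ‖(charFn p (t / n) - charFn p (t / n + Real.pi / n)) / (Fbar p n : ℂ)‖ ≤ K₀ := by
      rw [norm_div, Complex.norm_real, Real.norm_of_nonneg hFn.le, div_le_iff₀ hFn, norm_sub_rev]
      exact hinc n hn0 (t / n)
    rw [e, norm_mul, norm_mul]
    calc _ ≤ ((C + D) / c * t ^ (-γ)) * ((C + D) / c * t ^ (-γ)) * K₀ := by gcongr
      _ = K₀ * ((C + D) / c) ^ 2 * (t ^ (-γ) * t ^ (-γ)) := by ring
      _ = K₀ * ((C + D) / c) ^ 2 * t ^ (-(2 * γ)) := by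
          rw [← Real.rpow_add ht0]
          congr 2
          ring
      _ ≤ _ := by
          gcongr
          exact le_max_right _ _
  have hlim : ∀ t, 0 < t → ∃ l, Tendsto (fun n => q n t) atTop (𝓝 l) := by
    intro t ht
    obtain ⟨l, hl⟩ := exists_tendsto_exponent hp0 hp1 hα hreg hC hβ hβ0 hup t
    -- the limit is nonzero because the rescaled resolvent is bounded
    have hl0 : l ≠ 0 := by
      intro h0
      rw [h0] at hl
      have hX : 0 < t ^ (-β) + t ^ (-γ) :=
        add_pos (Real.rpow_pos_of_pos ht _) (Real.rpow_pos_of_pos ht _)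
      have hδ : 0 < (K * (t ^ (-β) + t ^ (-γ)))⁻¹ := by positivity
      have hnpi : Tendsto (fun n : ℕ => (n : ℝ) * Real.pi) atTop atTop :=
        tendsto_natCast_atTop_atTop.atTop_mul_const hpi
      have hl' := hl.norm
      rw [norm_zero] at hl'
      obtain ⟨n, hn1, hn2, hn3⟩ := ((eventually_ge_atTop 1).and
        ((hnpi.eventually_ge_atTop t).and (hl'.eventually (gt_mem_nhds hδ)))).exists
      obtain ⟨h1, h2⟩ := hrange n hn1 t ht hn2
      have hx := hne _ h1 h2
      have h3 := hb n hn1 t ht hn2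
      have e : q n t = ((1 - charFn p (t / n)) / (Fbar p n : ℂ))⁻¹ := by
        simp only [hq]
        rw [inv_div]
        exact (div_eq_mul_inv _ _).symm
      have hFc : (Fbar p n : ℂ) ≠ 0 := by exact_mod_cast (hpos n).ne'
      have hnz : 0 < ‖(1 - charFn p (t / n)) / (Fbar p n : ℂ)‖ :=
        norm_pos_iff.2 (div_ne_zero hx hFc)
      rw [e, norm_inv, inv_le_comm₀ hnz (by positivity)] at h3
      linarith
    refine ⟨l⁻¹, (hl.inv₀ hl0).congr fun n => ?_⟩
    simp only [hq]
    rw [inv_div, div_eq_mul_inv]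
  obtain ⟨l, hl⟩ := exists_tendsto_osc hKpos hβ hγβ hγ hcont hb hd hlim
  refine ⟨Real.pi⁻¹ * l.re, ?_⟩
  refine (((Complex.continuous_re.tendsto l).comp hl).const_mul Real.pi⁻¹).congr' ?_
  filter_upwards [eventually_ge_atTop 1] with n hn
  have hn1 : (1 : ℝ) ≤ n := by exact_mod_cast hn
  have hn0 : (0 : ℝ) < n := by linarith
  have hnc : (n : ℂ) ≠ 0 := by exact_mod_cast hn0.ne'
  have hint : IntervalIntegrable (fun θ : ℝ => (1 - charFn p θ)⁻¹ *
      Complex.exp ((-(n * θ) : ℝ) * Complex.I)) volume 0 Real.pi := by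
    refine intervalIntegrable_of_bound hpi.le
      (ContinuousOn.mul (ContinuousOn.inv₀ (continuous_const.sub hφ).continuousOn ?_)
        (by fun_prop)) ((hpowint 0 Real.pi).const_mul (Fbar p 1)⁻¹) ?_
    · exact fun θ hθ => hne θ hθ.1 hθ.2
    · intro θ h0 h1
      rw [norm_mul, Complex.norm_exp_ofReal_mul_I, mul_one, norm_inv]
      have h2 := (hre 1 le_rfl θ h0 (by linarith)).1
      have h3 := hrepos θ h0 h1
      rw [div_one] at h2
      rw [inv_mul_eq_div, le_div_iff₀ hF1, mul_comm]
      refine le_trans ?_ h2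
      gcongr
      exact Complex.re_le_norm _
  have hre_int : ∫ θ in (0 : ℝ)..Real.pi,
      ((1 - charFn p θ)⁻¹ * Complex.exp ((-(n * θ) : ℝ) * Complex.I)).re =
      (∫ θ in (0 : ℝ)..Real.pi,
        (1 - charFn p θ)⁻¹ * Complex.exp ((-(n * θ) : ℝ) * Complex.I)).re :=
    Complex.reCLM.intervalIntegral_comp_comm hint
  have hsub : ∫ t in (0 : ℝ)..(n * Real.pi), q n t * Complex.exp ((-t : ℝ) * Complex.I) =
      ((n * Fbar p n : ℝ) : ℂ) * ∫ θ in (0 : ℝ)..Real.pi,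
        (1 - charFn p θ)⁻¹ * Complex.exp ((-(n * θ) : ℝ) * Complex.I) := by
    have h := intervalIntegral.integral_comp_div (a := 0) (b := n * Real.pi)
      (fun θ : ℝ => (Fbar p n : ℂ) * ((1 - charFn p θ)⁻¹ *
        Complex.exp ((-(n * θ) : ℝ) * Complex.I))) hn0.ne'
    rw [zero_div, mul_div_cancel_left₀ _ hn0.ne', Complex.real_smul] at h
    rw [Complex.ofReal_mul, mul_assoc, ← intervalIntegral.integral_const_mul, ← h]
    refine intervalIntegral.integral_congr fun t _ => ?_
    have ht : (n : ℝ) * (t / n) = t := by field_simp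
    simp only [hq]
    rw [ht, mul_assoc]
  simp only [Function.comp]
  rw [hsub, Complex.re_ofReal_mul, renewalMass, (hinv n).tsum_eq, hre_int]
  ring

end Main

end SRT


/-- Garsia–Lamperti. If `α ∈ (1/2, 1)` then the strong renewal theorem holds:
`x·F̄(x)·g(x)` converges to a strictly positive real limit as `x → ∞`. -/
theorem srt_alpha_gt_half (p : ℕ → ℝ) (α : ℝ)
    (hp0 : ∀ k, 0 ≤ p k) (hp1 : HasSum p 1) (hp0lt : p 0 < 1)
    (hap : ∀ d : ℕ, (∀ k, p k ≠ 0 → d ∣ k) → d = 1)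
    (hα : 1 / 2 < α ∧ α < 1)
    (hreg : ∀ l : ℝ, 0 < l →
      Tendsto (fun x : ℝ => Fbar p (l * x) / Fbar p x) atTop (nhds (l ^ (-α)))) :
    ∃ L : ℝ, 0 < L ∧
      Tendsto (fun x : ℕ => (x : ℝ) * Fbar p x * renewalMass p x) atTop (nhds L) := by
  obtain ⟨hα1, hα2⟩ := hα
  have hanti := SRT.Fbar_antitone hp0 hp1
  have hpos := SRT.Fbar_pos hp0 hp1 hreg
  have hpi : 1 / Real.pi ≤ 1 := by
    rw [div_le_one Real.pi_pos]
    linarith [Real.pi_gt_three]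
  -- exponents `1 / 2 < γ < α < β < 1`
  obtain ⟨C, hC, hup⟩ := SRT.potter_up hanti hpos (SRT.Fbar_le_one hp0 hp1) (hreg 2 two_pos)
    (β := (α + 1) / 2) (by linarith) (by linarith)
  obtain ⟨D, hD, hdown⟩ := SRT.potter_down hanti hpos (hreg 2 two_pos)
    (γ := (α + 1 / 2) / 2) (by linarith) (by linarith) (u₀ := 1 / Real.pi)
    (by have := Real.pi_pos; positivity)
  obtain ⟨hs, L, hL⟩ := SRT.exists_limit hp0 hp1 hap (by linarith) hreg hC (by linarith)
    (by linarith) hup hD (by linarith) (by linarith) hdown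
  refine ⟨L, lt_of_le_of_ne ?_ fun h0 => ?_, hL⟩
  · refine ge_of_tendsto' hL fun x => ?_
    exact mul_nonneg (mul_nonneg x.cast_nonneg (hpos x).le) (SRT.renewalMass_nonneg hp0 x)
  · exact SRT.not_tendsto_zero hp0 hp1 hpos hs hC (by linarith) (by linarith) hup hD (by linarith)
      (by linarith) (fun u v hu huv => hdown u v (hpi.trans hu) huv) (h0 ▸ hL)
end

section
/- Suppose α ∈ (0, 1/2] and the strong renewal theorem holds, i.e. lim_{x→∞} x·F̄(x)·g(x) exists and is a strictly positive real number. Then necessarily (a) x·F̄(x)·p(x) → 0 as x → ∞, and (b) lim_{δ→0} limsup_{x→∞} x·F̄(x)·Σ_{w=1}^{⌊δx⌋} p(x−w)/(w·F̄(w)²) = 0. -/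
/-!
The proof replaces the truncation to few steps by geometric killing. For `c ∈ [0, 1]` let
`g_c(x) = ∑ₙ cⁿ P(Sₙ = x)`, the coefficients of `(1 - c P)⁻¹` where `P` is the generating function
of `p`; thus `g_1 = g`. Algebra of power series gives the resolvent identity
`g = c g_c + (1 - c) g_c * g`, its summed form `U ≤ U_c (c + (1 - c) U)` for the renewal functions
`U_c(x) = ∑_{y ≤ x} g_c(y)` (`ren_bound`), the bound `U(x) F̄(x) ≤ 1` (`ren_mul_fbar_le`), and the
one-big-jump inequality `g_c(x) ≥ c ∑_{w ≤ W} p(x - w) (g_c * g_c)(w)` for `2 W < x`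
(`one_big_jump`).

Upper bound (`killed_small`): take `1 - c = K F̄(x)`. Since `g` is regularly varying by assumption,
`U(δ x) F̄(x)` is bounded below, so for `K` large the probability measure `(1 - c) g_c` puts
almost all of its mass on `[0, δ x]`. There `g(x - y)` is close to `g(x)`, so the resolvent identity
leaves only a small fraction of `g(x)` for `c g_c(x)`.

Lower bound (`killed_lower`, `conv_lower`): when `1 - c ≤ F̄(w) / 32`, the resolvent identity and
`(g * g)(w) = O(1 / (w F̄(w)²))` show that `g_c(w)` has the order of `g(w)`, hence
`(g_c * g_c)(w)` is at least of order `1 / (w F̄(w)²)`.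

Since `c p(x) ≤ g_c(x)`, the upper bound gives (a). For (b), choose `K`, then `δ` so small that
`K F̄(x) ≤ F̄(w) / 32` for all `w ≤ δ x`; the one-big-jump inequality together with both bounds
controls all `w` above a fixed threshold, and (a) disposes of the finitely many others.
-/

open Filter Topology

namespace SRT

open PowerSeries

/-! ### Resolvents of the generating function -/

/-- Coefficientwise nonnegativity of a power series. -/
def NN (A : PowerSeries ℝ) : Prop := ∀ n, 0 ≤ coeff n A

lemma NN.mul {A B : PowerSeries ℝ} (hA : NN A) (hB : NN B) : NN (A * B) := by
  intro n
  rw [coeff_mul]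
  exact Finset.sum_nonneg fun i _ => mul_nonneg (hA _) (hB _)

lemma NN.C {c : ℝ} (hc : 0 ≤ c) : NN (C c) := by
  intro n
  rw [coeff_C]
  split_ifs <;> simp [hc]

lemma NN.pow {A : PowerSeries ℝ} (hA : NN A) (n : ℕ) : NN (A ^ n) := by
  induction n with
  | zero => simpa using NN.C (zero_le_one (α := ℝ))
  | succ n ih => rw [pow_succ]; exact ih.mul hA

/-- The resolvent `∑ₙ cⁿ Pⁿ = (1 - c P)⁻¹` of the generating function of `p`; its coefficients are
the renewal masses of the walk killed at rate `1 - c` per step. -/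
noncomputable def res (p : ℕ → ℝ) (c : ℝ) : PowerSeries ℝ := (1 - C c * mk p)⁻¹

/-- The killed renewal mass `g_c(x) = ∑ₙ cⁿ P(Sₙ = x)`. -/
noncomputable def gl (p : ℕ → ℝ) (c : ℝ) (x : ℕ) : ℝ := coeff x (res p c)

lemma res_mul {p : ℕ → ℝ} {c : ℝ} (h : c * p 0 < 1) : res p c * (1 - C c * mk p) = 1 := by
  apply PowerSeries.inv_mul_cancel
  have : constantCoeff (1 - C c * mk p) = 1 - c * p 0 := by
    rw [map_sub, map_mul, constantCoeff_C, map_one, ← coeff_zero_eq_constantCoeff_apply (mk p),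
      coeff_mk]
  rw [this]
  linarith

lemma res_nonneg {p : ℕ → ℝ} {c : ℝ} (hp : ∀ k, 0 ≤ p k) (hc : 0 ≤ c) (h : c * p 0 < 1) :
    NN (res p c) := by
  intro n
  induction n using Nat.strong_induction_on with
  | _ n ih =>
    have h1 : res p c = 1 + C c * (res p c * mk p) := by
      linear_combination res_mul h
    have h2 : coeff n (res p c) = coeff n (1 : PowerSeries ℝ) +
        c * ∑ y ∈ Finset.range (n + 1), coeff y (res p c) * p (n - y) := by
      conv_lhs => rw [h1]
      rw [map_add, coeff_C_mul, coeff_mul, Finset.Nat.sum_antidiagonal_eq_sum_range_succ_mk]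
      simp
    rw [Finset.sum_range_succ] at h2
    have h3 : 0 ≤ ∑ y ∈ Finset.range n, coeff y (res p c) * p (n - y) :=
      Finset.sum_nonneg fun y hy => mul_nonneg (ih y (Finset.mem_range.1 hy)) (hp _)
    have h4 : 0 ≤ coeff n (1 : PowerSeries ℝ) := by
      rw [coeff_one]; split_ifs <;> simp
    have h5 : (1 - c * p 0) * coeff n (res p c) = coeff n (1 : PowerSeries ℝ) +
        c * ∑ y ∈ Finset.range n, coeff y (res p c) * p (n - y) := by
      simp only [Nat.sub_self] at h2
      linear_combination h2
    have h6 : 0 ≤ (1 - c * p 0) * coeff n (res p c) := by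
      rw [h5]; positivity
    exact nonneg_of_mul_nonneg_right h6 (by linarith)

lemma convPow_eq (p : ℕ → ℝ) (n x : ℕ) : convPow p n x = coeff x (mk p ^ n) := by
  induction n generalizing x with
  | zero => simp [convPow, coeff_one]
  | succ n ih =>
    rw [pow_succ, coeff_mul, Finset.Nat.sum_antidiagonal_eq_sum_range_succ_mk]
    simp [convPow, ih]

/-- The renewal masses are finite and are the coefficients of `(1 - P)⁻¹`. -/
lemma renewalMass_eq_s3 {p : ℕ → ℝ} (hp : ∀ k, 0 ≤ p k) (h0 : p 0 < 1) (x : ℕ) :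
    renewalMass p x = gl p 1 x := by
  have hpz : 1 * p 0 < 1 := by linarith
  have hm : res p 1 * (1 - mk p) = 1 := by simpa using res_mul hpz
  have hP : NN (mk p) := fun n => by simpa using hp n
  have hG : NN (res p 1) := res_nonneg hp zero_le_one hpz
  -- the remainder `(1 - P)⁻¹ - ∑_{n < N} Pⁿ = Pᴺ (1 - P)⁻¹` is coefficientwise nonnegative
  have hsum : ∀ y, Summable fun n => convPow p n y := by
    intro y
    refine summable_of_sum_range_le (c := gl p 1 y) ?_ ?_
    · intro n; rw [convPow_eq]; exact hP.pow n y
    · intro N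
      have h1 : res p 1 = ∑ n ∈ Finset.range N, mk p ^ n + mk p ^ N * res p 1 := by
        have := geom_sum_mul_neg (mk p) N
        linear_combination (∑ n ∈ Finset.range N, mk p ^ n) * hm - res p 1 * this
      have h2 : gl p 1 y = ∑ n ∈ Finset.range N, convPow p n y
          + coeff y (mk p ^ N * res p 1) := by
        unfold gl
        conv_lhs => rw [h1]
        simp [convPow_eq]
      have := (hP.pow N).mul hG y
      linarith
  have key : mk (renewalMass p) = 1 + mk (renewalMass p) * mk p := by
    ext y
    rw [map_add, coeff_mul, Finset.Nat.sum_antidiagonal_eq_sum_range_succ_mk]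
    simp only [coeff_mk]
    have h1 : renewalMass p y = convPow p 0 y + ∑' n, convPow p (n + 1) y :=
      (hsum y).tsum_eq_zero_add
    rw [h1]
    congr 1
    · simp [convPow, coeff_one]
    · simp only [convPow]
      rw [Summable.tsum_finsetSum (fun i _ => (hsum i).mul_right _)]
      refine Finset.sum_congr rfl fun i _ => ?_
      rw [tsum_mul_right, renewalMass]
  have : mk (renewalMass p) = res p 1 := by
    linear_combination (-mk (renewalMass p)) * hm + res p 1 * key
  rw [gl, ← this, coeff_mk]

/-- Resolvent identity `g = c g_c + (1 - c) g_c * g`. -/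
lemma resolvent {p : ℕ → ℝ} {c : ℝ} (h : c * p 0 < 1) (h0 : p 0 < 1) :
    res p 1 = C c * res p c + C (1 - c) * (res p c * res p 1) := by
  have h1 := res_mul h
  have h2 : res p 1 * (1 - mk p) = 1 := by simpa using res_mul (p := p) (c := 1) (by linarith)
  rw [map_sub, map_one]
  linear_combination (-res p 1) * h1 + C c * res p c * h2

lemma resolvent_coeff {p : ℕ → ℝ} {c : ℝ} (h : c * p 0 < 1) (h0 : p 0 < 1) (x : ℕ) :
    gl p 1 x = c * gl p c x +
      (1 - c) * ∑ y ∈ Finset.range (x + 1), gl p c y * gl p 1 (x - y) := by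
  have := congrArg (coeff x) (resolvent h h0)
  rw [map_add, coeff_C_mul, coeff_C_mul, coeff_mul,
    Finset.Nat.sum_antidiagonal_eq_sum_range_succ_mk] at this
  exact this

lemma gl_le {p : ℕ → ℝ} {c : ℝ} (hp : ∀ k, 0 ≤ p k) (hc0 : 0 ≤ c) (hc1 : c ≤ 1)
    (h0 : p 0 < 1) (x : ℕ) : gl p c x ≤ gl p 1 x := by
  have h : c * p 0 < 1 := by nlinarith [hp 0]
  have h1 := res_mul h
  have h2 : res p 1 * (1 - mk p) = 1 := by simpa using res_mul (p := p) (c := 1) (by linarith)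
  have h3 : res p 1 = res p c + C (1 - c) * (mk p * (res p c * res p 1)) := by
    rw [map_sub, map_one]
    linear_combination (-res p 1) * h1 + res p c * h2
  have hP : NN (mk p) := fun n => by simpa using hp n
  have h4 := ((NN.C (sub_nonneg.2 hc1)).mul (hP.mul ((res_nonneg hp hc0 h).mul
    (res_nonneg hp zero_le_one (by linarith))))) x
  have := congrArg (coeff x) h3
  rw [map_add] at this
  unfold gl
  linarith

/-- The renewal function `U_c(x) = ∑_{y ≤ x} g_c(y)`. -/
noncomputable def ren (p : ℕ → ℝ) (c : ℝ) (x : ℕ) : ℝ := ∑ y ∈ Finset.range (x + 1), gl p c y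

/-- Summing the resolvent identity and using that `U` is nondecreasing gives
`U ≤ U_c (c + (1 - c) U)`. -/
lemma ren_bound {p : ℕ → ℝ} {c : ℝ} (hp : ∀ k, 0 ≤ p k) (hc0 : 0 ≤ c) (hc1 : c ≤ 1)
    (h0 : p 0 < 1) (x : ℕ) : ren p 1 x ≤ ren p c x * (c + (1 - c) * ren p 1 x) := by
  have h : c * p 0 < 1 := by nlinarith [hp 0]
  have hE : ∀ (A : PowerSeries ℝ) (n : ℕ), coeff n (A * mk (fun _ => (1 : ℝ))) =
      ∑ y ∈ Finset.range (n + 1), coeff y A := by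
    intro A n
    rw [coeff_mul, Finset.Nat.sum_antidiagonal_eq_sum_range_succ_mk]
    simp
  have h1 : res p 1 * mk (fun _ => (1 : ℝ)) = C c * (res p c * mk (fun _ => (1 : ℝ))) +
      C (1 - c) * (res p c * (res p 1 * mk (fun _ => (1 : ℝ)))) := by
    linear_combination mk (fun _ => (1 : ℝ)) * resolvent h h0
  have h2 := congrArg (coeff x) h1
  rw [map_add, coeff_C_mul, coeff_C_mul, coeff_mul x (res p c) (res p 1 * _),
    Finset.Nat.sum_antidiagonal_eq_sum_range_succ_mk] at h2
  simp only [hE] at h2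
  change ren p 1 x = c * ren p c x +
    (1 - c) * ∑ y ∈ Finset.range (x + 1), gl p c y * ren p 1 (x - y) at h2
  have h3 : ∑ y ∈ Finset.range (x + 1), gl p c y * ren p 1 (x - y) ≤ ren p c x * ren p 1 x := by
    conv_rhs => rw [ren, Finset.sum_mul]
    refine Finset.sum_le_sum fun y _ => mul_le_mul_of_nonneg_left ?_ (res_nonneg hp hc0 h y)
    refine Finset.sum_le_sum_of_subset_of_nonneg ?_ fun i _ _ =>
      res_nonneg hp zero_le_one (by linarith) i
    exact Finset.range_mono (by omega)
  nlinarith [mul_le_mul_of_nonneg_left h3 (sub_nonneg.2 hc1)]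

/-- One-big-jump bound: a jump of size `x - w > W` combined with the remaining steps summing to
`w ≤ W`. The index of the big jump is unique, and the steps before and after it contribute the
convolution `(g_c * g_c)(w)`. -/
lemma one_big_jump {p : ℕ → ℝ} {c : ℝ} (hp : ∀ k, 0 ≤ p k) (hc0 : 0 ≤ c) (hc1 : c ≤ 1)
    (h0 : p 0 < 1) {W x : ℕ} (hW : 2 * W < x) :
    c * ∑ w ∈ Finset.range (W + 1), p (x - w) * coeff w (res p c * res p c) ≤ gl p c x := by
  have h : c * p 0 < 1 := by nlinarith [hp 0]
  set q : ℕ → ℝ := fun k => if k ≤ W then p k else 0 with hq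
  set r : ℕ → ℝ := fun k => if k ≤ W then 0 else p k with hr
  have hq0 : ∀ k, 0 ≤ q k := fun k => by simp only [hq]; split_ifs <;> simp [hp]
  have hR : NN (mk r) := fun k => by
    simp only [hr, coeff_mk]; split_ifs <;> simp [hp]
  have hPQ : mk p = mk q + mk r := by
    ext k; simp only [hq, hr, map_add, coeff_mk]; split_ifs <;> simp
  have hcq : c * q 0 < 1 := by simpa [hq] using h
  have hG := res_mul h
  have hH := res_mul hcq
  have hGn := res_nonneg hp hc0 h
  have hHn := res_nonneg hq0 hc0 hcq
  set G := res p c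
  set H := res q c
  rw [hPQ] at hG
  have e1 : G = H + C c * (mk r * (G * H)) := by
    linear_combination (-G) * hH + H * hG
  have e2 : G = H + C c * (mk r * (H * H)) + C c * C c * (mk r * mk r * (G * (H * H))) := by
    linear_combination e1 + C c * mk r * H * e1
  have e3 : G * G = H * H + mk r * (C c * (G * H) * (G + H)) := by
    linear_combination (G + H) * e1
  have e4 : ∀ w ≤ W, coeff w (G * G) = coeff w (H * H) := by
    intro w hw
    rw [e3, map_add, coeff_mul w (mk r), Finset.sum_eq_zero, add_zero]
    intro i hi
    have : i.1 ≤ W := by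
      have := Finset.HasAntidiagonal.mem_antidiagonal.1 hi
      omega
    simp [hr, this]
  have e5 : c * coeff x (mk r * (H * H)) ≤ coeff x G := by
    have e6 := congrArg (coeff x) e2
    rw [map_add, map_add, coeff_C_mul] at e6
    have t1 := hHn x
    have t2 := (((NN.C hc0).mul (NN.C hc0)).mul ((hR.mul hR).mul (hGn.mul (hHn.mul hHn)))) x
    linarith
  refine le_trans (mul_le_mul_of_nonneg_left ?_ hc0) e5
  rw [mul_comm (mk r), coeff_mul, Finset.Nat.sum_antidiagonal_eq_sum_range_succ_mk]
  refine le_trans (Finset.sum_le_sum fun w hw => ?_)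
    (Finset.sum_le_sum_of_subset_of_nonneg (Finset.range_mono (by omega : W + 1 ≤ x + 1))
      fun i _ _ => mul_nonneg ((hHn.mul hHn) i) (hR _))
  have hw' : w ≤ W := Nat.lt_succ_iff.1 (Finset.mem_range.1 hw)
  have : ¬ (x - w ≤ W) := by omega
  rw [e4 w hw', mul_comm]
  simp [hr, this]

/-! ### The tail -/

lemma fbar_summable {p : ℕ → ℝ} (hp : ∀ k, 0 ≤ p k) (hs : Summable p) (x : ℝ) :
    Summable fun k : ℕ => if x < (k : ℝ) then p k else 0 := by
  refine Summable.of_nonneg_of_le (fun k => ?_) (fun k => ?_) hs <;> split_ifs <;> simp [hp]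

lemma fbar_nonneg {p : ℕ → ℝ} (hp : ∀ k, 0 ≤ p k) (x : ℝ) : 0 ≤ Fbar p x :=
  tsum_nonneg fun k => by split_ifs <;> simp [hp]

lemma fbar_anti {p : ℕ → ℝ} (hp : ∀ k, 0 ≤ p k) (hs : Summable p) : Antitone (Fbar p) := by
  intro x y hxy
  refine Summable.tsum_le_tsum (fun k => ?_) (fbar_summable hp hs y) (fbar_summable hp hs x)
  by_cases h : y < (k : ℝ)
  · simp [h, hxy.trans_lt h]
  · simp only [h, if_false]; split_ifs <;> simp [hp]

lemma fbar_nat {p : ℕ → ℝ} (hp1 : HasSum p 1) (n : ℕ) :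
    Fbar p n = 1 - ∑ k ∈ Finset.range (n + 1), p k := by
  have h1 := hp1.summable.sum_add_tsum_nat_add (n + 1)
  have h2 : Fbar p n = ∑' k, p (k + (n + 1)) := by
    unfold Fbar
    have hs : Summable fun k : ℕ => if (n : ℝ) < (k : ℝ) then p k else 0 := by
      have := (hp1.summable.indicator {k : ℕ | n < k})
      refine this.congr fun k => ?_
      simp [Set.indicator]
    rw [← hs.sum_add_tsum_nat_add (n + 1), Finset.sum_eq_zero, zero_add]
    · refine tsum_congr fun k => ?_
      rw [if_pos]
      exact_mod_cast (by omega : n < k + (n + 1))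
    · intro k hk
      rw [if_neg]
      have := Finset.mem_range.1 hk
      exact not_lt.2 (by exact_mod_cast (by omega : k ≤ n))
  rw [hp1.tsum_eq] at h1
  linarith

lemma fbar_tendsto {p : ℕ → ℝ} (hp1 : HasSum p 1) :
    Tendsto (fun n : ℕ => Fbar p n) atTop (𝓝 0) := by
  have h := (hp1.tendsto_sum_nat.comp (tendsto_add_atTop_nat 1)).const_sub 1
  rw [sub_self] at h
  exact h.congr fun n => (fbar_nat hp1 n).symm

/-- The last-exit decomposition `∑_{y ≤ x} g(y) F̄(x - y) = 1` yields `U(x) F̄(x) ≤ 1`. -/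
lemma ren_mul_fbar_le {p : ℕ → ℝ} (hp : ∀ k, 0 ≤ p k) (hp1 : HasSum p 1) (h0 : p 0 < 1) (x : ℕ) :
    ren p 1 x * Fbar p x ≤ 1 := by
  have hT : mk (fun n : ℕ => Fbar p n) * (1 - X) = 1 - mk p := by
    ext n
    rw [mul_sub, mul_one]
    cases n with
    | zero => simp [fbar_nat hp1]
    | succ n =>
      rw [map_sub, coeff_succ_mul_X]
      simp only [map_sub, coeff_mk, fbar_nat hp1, coeff_one]
      rw [Finset.sum_range_succ _ (n + 1)]
      simp
  have h2 : res p 1 * (1 - mk p) = 1 := by simpa using res_mul (p := p) (c := 1) (by linarith)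
  have hE : mk (fun _ => (1 : ℝ)) * (1 - X) = 1 := by
    exact PowerSeries.mk_one_mul_one_sub_eq_one ℝ
  have h3 : res p 1 * mk (fun n : ℕ => Fbar p n) = mk (fun _ => (1 : ℝ)) := by
    linear_combination (-(res p 1 * mk (fun n : ℕ => Fbar p n))) * hE +
      mk (fun _ => (1 : ℝ)) * res p 1 * hT + mk (fun _ => (1 : ℝ)) * h2
  have h4 := congrArg (coeff x) h3
  rw [coeff_mul, Finset.Nat.sum_antidiagonal_eq_sum_range_succ_mk] at h4
  simp only [coeff_mk] at h4
  refine le_of_le_of_eq ?_ h4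
  rw [ren, Finset.sum_mul]
  refine Finset.sum_le_sum fun y _ => mul_le_mul_of_nonneg_left ?_
    (res_nonneg hp zero_le_one (by linarith) y)
  exact fbar_anti hp hp1.summable (by exact_mod_cast Nat.sub_le x y)

/-! ### Regular variation -/

lemma fbar_pos {p : ℕ → ℝ} {α : ℝ} (hp : ∀ k, 0 ≤ p k) (hs : Summable p)
    (hreg : ∀ l : ℝ, 0 < l →
      Tendsto (fun x : ℝ => Fbar p (l * x) / Fbar p x) atTop (𝓝 (l ^ (-α)))) (x : ℝ) :
    0 < Fbar p x := by
  have h := hreg 1 one_pos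
  rw [Real.one_rpow] at h
  have h1 := h.eventually (lt_mem_nhds (zero_lt_one (α := ℝ)))
  obtain ⟨y, hy, hxy⟩ := (h1.and (eventually_ge_atTop x)).exists
  have hy0 : Fbar p y ≠ 0 := by
    intro h0
    simp [h0] at hy
  exact ((fbar_nonneg hp y).lt_of_ne' hy0).trans_le (fbar_anti hp hs hxy)

lemma fbar_scale_le {p : ℕ → ℝ} {α l C : ℝ} (hp : ∀ k, 0 ≤ p k) (hs : Summable p)
    (hreg : ∀ l : ℝ, 0 < l →
      Tendsto (fun x : ℝ => Fbar p (l * x) / Fbar p x) atTop (𝓝 (l ^ (-α))))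
    (hl : 0 < l) (hC : l ^ (-α) < C) :
    ∀ᶠ x : ℕ in atTop, Fbar p (l * x) ≤ C * Fbar p x := by
  have h := ((hreg l hl).comp tendsto_natCast_atTop_atTop).eventually (gt_mem_nhds hC)
  filter_upwards [h] with x hx
  exact ((div_lt_iff₀ (fbar_pos hp hs hreg _)).1 hx).le

lemma fbar_scale_ge {p : ℕ → ℝ} {α l C : ℝ} (hp : ∀ k, 0 ≤ p k) (hs : Summable p)
    (hreg : ∀ l : ℝ, 0 < l →
      Tendsto (fun x : ℝ => Fbar p (l * x) / Fbar p x) atTop (𝓝 (l ^ (-α))))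
    (hl : 0 < l) (hC : C < l ^ (-α)) :
    ∀ᶠ x : ℕ in atTop, C * Fbar p x ≤ Fbar p (l * x) := by
  have h := ((hreg l hl).comp tendsto_natCast_atTop_atTop).eventually (lt_mem_nhds hC)
  filter_upwards [h] with x hx
  exact ((lt_div_iff₀ (fbar_pos hp hs hreg _)).1 hx).le

/-! ### Two-sided control of the killed renewal mass -/

lemma gl_nonneg {p : ℕ → ℝ} {c : ℝ} (hp : ∀ k, 0 ≤ p k) (h0 : p 0 < 1) (hc0 : 0 ≤ c)
    (hc1 : c ≤ 1) (x : ℕ) : 0 ≤ gl p c x :=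
  res_nonneg hp hc0 (by nlinarith [hp 0]) x

/-- If the killing rate `1 - c` is at most a small multiple of `F̄(w)`, the killed renewal mass at
`w` is still of the order of `g(w)`: by the resolvent identity the loss is at most
`(1 - c) (g * g)(w)`, and `(g * g)(w) = O(1 / (w F̄(w)²))`. -/
lemma killed_lower {p : ℕ → ℝ} {α L : ℝ} (hp : ∀ k, 0 ≤ p k) (hp1 : HasSum p 1) (h0 : p 0 < 1)
    (hreg : ∀ l : ℝ, 0 < l →
      Tendsto (fun x : ℝ => Fbar p (l * x) / Fbar p x) atTop (𝓝 (l ^ (-α))))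
    (hL : 0 < L) (hlim : Tendsto (fun x : ℕ => (x : ℝ) * Fbar p x * gl p 1 x) atTop (𝓝 L)) :
    ∃ w₀ : ℕ, ∀ w ≥ w₀, ∀ c : ℝ, 0 ≤ c → c ≤ 1 → 1 - c ≤ 1 / 32 * Fbar p w →
      L / 4 ≤ w * Fbar p w * gl p c w := by
  have e1 := hlim.eventually (lt_mem_nhds (by linarith : L / 2 < L))
  have e2 := hlim.eventually (gt_mem_nhds (by linarith : L < 2 * L))
  obtain ⟨N, hN⟩ := eventually_atTop.1 (e1.and e2)
  refine ⟨2 * N, fun w hw c hc0 hc1 hc => ?_⟩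
  have hfpos := fbar_pos hp hp1.summable hreg w
  have hg := gl_nonneg hp h0 zero_le_one le_rfl
  -- `g(z) ≤ 4 L / (w F̄(w))` on the upper half `w / 2 ≤ z ≤ w`
  have hz : ∀ z ≤ w, w ≤ 2 * z → w * Fbar p w * gl p 1 z ≤ 4 * L := by
    intro z hzw hz
    have t1 := (hN z (by omega)).2
    have t2 : Fbar p w ≤ Fbar p z := fbar_anti hp hp1.summable (by exact_mod_cast hzw)
    have t3 : (w : ℝ) ≤ 2 * z := by exact_mod_cast hz
    calc (w : ℝ) * Fbar p w * gl p 1 z ≤ (2 * z) * Fbar p z * gl p 1 z := by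
          gcongr
          exact hg z
      _ ≤ 4 * L := by linarith
  have hS : w * Fbar p w * ∑ y ∈ Finset.range (w + 1), gl p c y * gl p 1 (w - y)
      ≤ 8 * L * ren p 1 w := by
    have t1 : ∀ y ∈ Finset.range (w + 1), w * Fbar p w * (gl p c y * gl p 1 (w - y)) ≤
        4 * L * (gl p 1 y + gl p 1 (w - y)) := by
      intro y hy
      have hy' : y ≤ w := Nat.lt_succ_iff.1 (Finset.mem_range.1 hy)
      have s1 : gl p c y * gl p 1 (w - y) ≤ gl p 1 y * gl p 1 (w - y) :=
        mul_le_mul_of_nonneg_right (gl_le hp hc0 hc1 h0 y) (hg _)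
      have s2 := mul_le_mul_of_nonneg_left s1 (by positivity : 0 ≤ (w : ℝ) * Fbar p w)
      have gy := hg y
      have gwy := hg (w - y)
      rcases le_total w (2 * y) with h | h
      · nlinarith [mul_le_mul_of_nonneg_right (hz y hy' h) gwy]
      · nlinarith [mul_le_mul_of_nonneg_right (hz (w - y) (by omega) (by omega)) gy]
    rw [Finset.mul_sum]
    refine (Finset.sum_le_sum t1).trans (le_of_eq ?_)
    rw [← Finset.mul_sum, Finset.sum_add_distrib, Finset.sum_flip (fun y => gl p 1 y), ← ren]
    ring
  have hU := ren_mul_fbar_le hp hp1 h0 w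
  have hres := resolvent_coeff (p := p) (c := c) (by nlinarith [hp 0]) h0 w
  set S := ∑ y ∈ Finset.range (w + 1), gl p c y * gl p 1 (w - y) with hSdef
  have hS0 : 0 ≤ S := Finset.sum_nonneg fun y _ =>
    mul_nonneg (gl_nonneg hp h0 hc0 hc1 y) (hg _)
  have k1 : (1 - c) * (w * Fbar p w * S) ≤ L / 4 := by
    calc (1 - c) * (w * Fbar p w * S) ≤ 1 / 32 * Fbar p w * (8 * L * ren p 1 w) := by
          gcongr
      _ = L / 4 * (ren p 1 w * Fbar p w) := by ring
      _ ≤ L / 4 := by nlinarith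
  have k2 := (hN w (by omega)).1
  rw [hres] at k2
  have k3 : c * (w * Fbar p w * gl p c w) ≤ w * Fbar p w * gl p c w := by
    have : 0 ≤ w * Fbar p w * gl p c w :=
      mul_nonneg (by positivity) (gl_nonneg hp h0 hc0 hc1 w)
    nlinarith
  nlinarith

/-- The convolution `(g_c * g_c)(w)` is at least of order `1 / (w F̄(w)²)`: the middle third of the
convolution sum already has this order, by `killed_lower`. -/
lemma conv_lower {p : ℕ → ℝ} {α L : ℝ} (hp : ∀ k, 0 ≤ p k) (hp1 : HasSum p 1) (h0 : p 0 < 1)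
    (hreg : ∀ l : ℝ, 0 < l →
      Tendsto (fun x : ℝ => Fbar p (l * x) / Fbar p x) atTop (𝓝 (l ^ (-α))))
    (hL : 0 < L) (hlim : Tendsto (fun x : ℕ => (x : ℝ) * Fbar p x * gl p 1 x) atTop (𝓝 L)) :
    ∃ b > 0, ∃ w₀ : ℕ, ∀ w ≥ w₀, ∀ c : ℝ, 0 ≤ c → c ≤ 1 → 1 - c ≤ 1 / 32 * Fbar p w →
      b ≤ w * Fbar p w ^ 2 * PowerSeries.coeff w (res p c * res p c) := by
  obtain ⟨w₁, hw₁⟩ := killed_lower hp hp1 h0 hreg hL hlim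
  set C : ℝ := (1 / 3 : ℝ) ^ (-α) + 1 with hCdef
  have hC : 0 < C := by positivity
  have e1 := fbar_scale_le hp hp1.summable hreg (by norm_num : (0 : ℝ) < 1 / 3)
    (by linarith : (1 / 3 : ℝ) ^ (-α) < C)
  obtain ⟨w₂, hw₂⟩ := eventually_atTop.1 e1
  set b₁ : ℝ := L / (4 * C) with hb₁
  have hb₁0 : 0 < b₁ := by positivity
  refine ⟨b₁ ^ 2 / 6, by positivity, max (3 * w₁) (max w₂ 2), fun w hw c hc0 hc1 hc => ?_⟩
  have hwa : 3 * w₁ ≤ w := (le_max_left _ _).trans hw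
  have hwb : w₂ ≤ w := ((le_max_left _ _).trans (le_max_right _ _)).trans hw
  have hwc : 2 ≤ w := ((le_max_right _ _).trans (le_max_right _ _)).trans hw
  have hfpos := fbar_pos hp hp1.summable hreg w
  have hwpos : (0 : ℝ) < w := by exact_mod_cast (by omega : 0 < w)
  have hgc := gl_nonneg hp h0 hc0 hc1
  have hy : ∀ y ≤ w, w ≤ 3 * y → b₁ ≤ w * Fbar p w * gl p c y := by
    intro y hyw hy
    have hyw' : (y : ℝ) ≤ w := by exact_mod_cast hyw
    have hy' : (w : ℝ) ≤ 3 * y := by exact_mod_cast hy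
    have t1 : Fbar p w ≤ Fbar p y := fbar_anti hp hp1.summable hyw'
    have t2 := hw₁ y (by omega) c hc0 hc1 (by linarith)
    have t3 : Fbar p y ≤ C * Fbar p w :=
      (fbar_anti hp hp1.summable (by linarith : (1 / 3 : ℝ) * w ≤ y)).trans (hw₂ w hwb)
    have t4 : (y : ℝ) * Fbar p y * gl p c y ≤ w * (C * Fbar p w) * gl p c y := by
      gcongr
      · exact hgc y
      · exact fbar_nonneg hp _
    rw [hb₁, div_le_iff₀ (by positivity)]
    nlinarith
  set a : ℕ := (w + 2) / 3 with ha
  have hcard : (w : ℝ) / 6 ≤ ((Finset.Icc a (w - a)).card : ℝ) := by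
    rw [Nat.card_Icc, div_le_iff₀ (by norm_num)]
    exact_mod_cast (by omega : w ≤ (w - a + 1 - a) * 6)
  have hconv : (w / 6 : ℝ) * b₁ ^ 2 ≤
      (w * Fbar p w) ^ 2 * PowerSeries.coeff w (res p c * res p c) := by
    rw [PowerSeries.coeff_mul, Finset.Nat.sum_antidiagonal_eq_sum_range_succ_mk]
    calc (w / 6 : ℝ) * b₁ ^ 2 ≤ ((Finset.Icc a (w - a)).card : ℝ) * b₁ ^ 2 := by gcongr
      _ = ∑ y ∈ Finset.Icc a (w - a), b₁ ^ 2 := by simp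
      _ ≤ ∑ y ∈ Finset.Icc a (w - a), (w * Fbar p w) ^ 2 * (gl p c y * gl p c (w - y)) := by
          refine Finset.sum_le_sum fun y hyI => ?_
          rw [Finset.mem_Icc] at hyI
          have s1 := hy y (by omega) (by omega)
          have s2 := hy (w - y) (by omega) (by omega)
          have s3 := hb₁0.le.trans s1
          calc b₁ ^ 2 = b₁ * b₁ := sq _
            _ ≤ (w * Fbar p w * gl p c y) * (w * Fbar p w * gl p c (w - y)) := by gcongr
            _ = _ := by ring
      _ = (w * Fbar p w) ^ 2 * ∑ y ∈ Finset.Icc a (w - a), gl p c y * gl p c (w - y) := by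
          rw [Finset.mul_sum]
      _ ≤ _ := by
          refine mul_le_mul_of_nonneg_left ?_ (by positivity)
          refine Finset.sum_le_sum_of_subset_of_nonneg ?_ fun i _ _ => mul_nonneg (hgc _) (hgc _)
          intro y hyI
          rw [Finset.mem_Icc] at hyI
          exact Finset.mem_range.2 (by omega)
  have : w * (b₁ ^ 2 / 6) ≤
      w * (w * Fbar p w ^ 2 * PowerSeries.coeff w (res p c * res p c)) := by
    linarith
  exact le_of_mul_le_mul_left this hwpos

/-- `U(δ x)` is at least of order `1 / F̄(x)`. -/
lemma ren_lower {p : ℕ → ℝ} {α L δ : ℝ} (hp : ∀ k, 0 ≤ p k) (hp1 : HasSum p 1) (h0 : p 0 < 1)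
    (hreg : ∀ l : ℝ, 0 < l →
      Tendsto (fun x : ℝ => Fbar p (l * x) / Fbar p x) atTop (𝓝 (l ^ (-α))))
    (hL : 0 < L) (hlim : Tendsto (fun x : ℕ => (x : ℝ) * Fbar p x * gl p 1 x) atTop (𝓝 L))
    (hδ : 0 < δ) :
    ∃ b > 0, ∀ᶠ x : ℕ in atTop, b ≤ Fbar p x * ren p 1 ⌊δ * (x : ℝ)⌋₊ := by
  have e1 := hlim.eventually (lt_mem_nhds (by linarith : L / 2 < L))
  obtain ⟨N, hN⟩ := eventually_atTop.1 e1
  set C : ℝ := (δ / 2) ^ (-α) + 1 with hCdef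
  have hC : 0 < C := by positivity
  have e2 := fbar_scale_le hp hp1.summable hreg (by positivity : (0 : ℝ) < δ / 2)
    (by linarith : (δ / 2) ^ (-α) < C)
  have e3 : Tendsto (fun x : ℕ => ⌊δ * (x : ℝ)⌋₊) atTop atTop :=
    tendsto_nat_floor_atTop.comp (tendsto_natCast_atTop_atTop.const_mul_atTop hδ)
  refine ⟨L / (4 * C), by positivity, ?_⟩
  filter_upwards [e2, e3.eventually (eventually_ge_atTop (2 * N + 1))] with x hx hd
  have hfpos := fbar_pos hp hp1.summable hreg x
  have hg := gl_nonneg hp h0 zero_le_one le_rfl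
  have hdx : δ * (x : ℝ) < ⌊δ * (x : ℝ)⌋₊ + 1 := Nat.lt_floor_add_one _
  set d := ⌊δ * (x : ℝ)⌋₊
  have hdpos : (0 : ℝ) < d := by exact_mod_cast (by omega : 0 < d)
  have hi : ∀ i ∈ Finset.Ioc (d / 2) d, L / 2 ≤ d * (C * Fbar p x) * gl p 1 i := by
    intro i hi
    rw [Finset.mem_Ioc] at hi
    have hid : (i : ℝ) ≤ d := by exact_mod_cast hi.2
    have hid2 : (d : ℝ) + 1 ≤ 2 * i := by exact_mod_cast (by omega : d + 1 ≤ 2 * i)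
    have t1 := hN i (by omega)
    have t2 : Fbar p i ≤ C * Fbar p x :=
      (fbar_anti hp hp1.summable (by linarith : δ / 2 * x ≤ (i : ℝ))).trans hx
    refine t1.le.trans ?_
    gcongr
    · exact hg i
    · exact fbar_nonneg hp _
  have hcard : (d : ℝ) / 2 ≤ ((Finset.Ioc (d / 2) d).card : ℝ) := by
    rw [Nat.card_Ioc, div_le_iff₀ (by norm_num)]
    exact_mod_cast (by omega : d ≤ (d - d / 2) * 2)
  have hsum : (d / 2 : ℝ) * (L / 2) ≤ d * (C * Fbar p x) * ren p 1 d := by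
    calc (d / 2 : ℝ) * (L / 2) ≤ ((Finset.Ioc (d / 2) d).card : ℝ) * (L / 2) := by gcongr
      _ = ∑ i ∈ Finset.Ioc (d / 2) d, L / 2 := by simp
      _ ≤ ∑ i ∈ Finset.Ioc (d / 2) d, d * (C * Fbar p x) * gl p 1 i := Finset.sum_le_sum hi
      _ = d * (C * Fbar p x) * ∑ i ∈ Finset.Ioc (d / 2) d, gl p 1 i := by rw [Finset.mul_sum]
      _ ≤ _ := by
          refine mul_le_mul_of_nonneg_left ?_ (by positivity)
          refine Finset.sum_le_sum_of_subset_of_nonneg ?_ fun i _ _ => hg i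
          intro y hyI
          rw [Finset.mem_Ioc] at hyI
          exact Finset.mem_range.2 (by omega)
  rw [div_le_iff₀ (by positivity)]
  have : (d : ℝ) * (L / 4) ≤ d * (C * Fbar p x * ren p 1 d) := by linarith
  have := le_of_mul_le_mul_left this hdpos
  linarith

set_option maxHeartbeats 800000 in
/-- Killing at rate `K F̄(x)` with `K` large makes the renewal mass at `x` an arbitrarily small
fraction of `g(x)`. In the resolvent identity `g(x) - c g_c(x) = (1 - c) (g_c * g)(x)` the measure
`(1 - c) g_c` is a probability measure which, for `K` large, is concentrated on `[0, δ x]`, and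
`g` varies little on `[(1 - δ) x, x]`. -/
lemma killed_small {p : ℕ → ℝ} {α L ε : ℝ} (hp : ∀ k, 0 ≤ p k) (hp1 : HasSum p 1) (h0 : p 0 < 1)
    (hreg : ∀ l : ℝ, 0 < l →
      Tendsto (fun x : ℝ => Fbar p (l * x) / Fbar p x) atTop (𝓝 (l ^ (-α))))
    (hL : 0 < L) (hlim : Tendsto (fun x : ℕ => (x : ℝ) * Fbar p x * gl p 1 x) atTop (𝓝 L))
    (hε : 0 < ε) :
    ∃ K > 0, ∀ᶠ x : ℕ in atTop, x * Fbar p x * gl p (1 - K * Fbar p x) x ≤ ε := by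
  obtain ⟨η, hη0, hη1, hηL, hηε⟩ : ∃ η : ℝ, 0 < η ∧ η ≤ 1 / 2 ∧ η ≤ L / 2 ∧
      4 * (1 + L) * η ≤ ε := by
    refine ⟨min (1 / 2) (min (L / 2) (ε / (4 * (1 + L)))), by positivity, min_le_left _ _,
      (min_le_right _ _).trans (min_le_left _ _), ?_⟩
    have : min (1 / 2) (min (L / 2) (ε / (4 * (1 + L)))) ≤ ε / (4 * (1 + L)) :=
      (min_le_right _ _).trans (min_le_right _ _)
    rw [le_div_iff₀ (by positivity)] at this
    linarith
  obtain ⟨δ, hδ0, hδ1, hδ⟩ : ∃ δ : ℝ, 0 < δ ∧ δ < 1 ∧ (1 - δ) ^ (-α) < 1 + η := by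
    have hc : ContinuousAt (fun δ : ℝ => (1 - δ) ^ (-α)) 0 :=
      (continuousAt_const.sub continuousAt_id).rpow_const (Or.inl (by simp))
    have h1 : ∀ᶠ δ in 𝓝[>] (0 : ℝ), (1 - δ) ^ (-α) < 1 + η := by
      have h3 : (1 - (0 : ℝ)) ^ (-α) < 1 + η := by simpa using hη0
      have := hc.eventually (gt_mem_nhds h3)
      exact this.filter_mono nhdsWithin_le_nhds
    have h2 : ∀ᶠ δ in 𝓝[>] (0 : ℝ), δ ∈ Set.Ioo (0 : ℝ) 1 := Ioo_mem_nhdsGT one_pos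
    obtain ⟨δ, ha, hb⟩ := (h1.and h2).exists
    exact ⟨δ, hb.1, hb.2, ha⟩
  obtain ⟨b, hb, hbU⟩ := ren_lower hp hp1 h0 hreg hL hlim hδ0
  have e1 := hlim.eventually (lt_mem_nhds (by linarith : L - η < L))
  have e2 := hlim.eventually (gt_mem_nhds (by linarith : L < L + η))
  obtain ⟨N, hN⟩ := eventually_atTop.1 e1
  have e3 := fbar_scale_le hp hp1.summable hreg (by linarith : 0 < 1 - δ) hδ
  set K : ℝ := 1 / (η * b) with hK
  have hK0 : 0 < K := by positivity
  have e4 : ∀ᶠ x : ℕ in atTop, Fbar p x < 1 / (2 * K) :=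
    (fbar_tendsto hp1).eventually (gt_mem_nhds (by positivity))
  have e5 : ∀ᶠ x : ℕ in atTop, (N : ℝ) ≤ (1 - δ) * x :=
    (tendsto_natCast_atTop_atTop.const_mul_atTop (by linarith : 0 < 1 - δ)).eventually
      (eventually_ge_atTop (N : ℝ))
  refine ⟨K, hK0, ?_⟩
  filter_upwards [hbU, e2, e3, e4, e5] with x hx1 hx2 hx3 hx4 hx5
  have hfpos := fbar_pos hp hp1.summable hreg x
  have hg := gl_nonneg hp h0 zero_le_one le_rfl
  rw [lt_div_iff₀ (by positivity)] at hx4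
  set c : ℝ := 1 - K * Fbar p x with hcdef
  have hKf : 0 < K * Fbar p x := by positivity
  have hc0 : 1 / 2 ≤ c := by linarith
  have hc1 : c ≤ 1 := by linarith
  have hgc := gl_nonneg hp h0 (by linarith : 0 ≤ c) hc1
  have hdx : (⌊δ * (x : ℝ)⌋₊ : ℝ) ≤ δ * x := Nat.floor_le (by positivity)
  set d := ⌊δ * (x : ℝ)⌋₊
  have hdx' : d ≤ x := by
    have : (d : ℝ) ≤ x := hdx.trans (by nlinarith [(Nat.cast_nonneg x : (0 : ℝ) ≤ x)])
    exact_mod_cast this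
  -- concentration of `(1 - c) g_c` on `[0, δ x]`
  have hV : 1 ≤ (1 - c) * ren p c d * (1 + η) := by
    have t1 := ren_bound hp (by linarith : 0 ≤ c) hc1 h0 d
    have t2 : 1 ≤ η * ((1 - c) * ren p 1 d) := by
      have : η * ((1 - c) * ren p 1 d) = Fbar p x * ren p 1 d / b := by
        rw [hcdef, hK]; field_simp; ring
      rw [this, le_div_iff₀ hb]; linarith
    have hrc : 0 ≤ ren p c d := Finset.sum_nonneg fun y _ => hgc y
    set t := (1 - c) * ren p 1 d
    set V := (1 - c) * ren p c d with hVdef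
    have hV0 : 0 ≤ V := mul_nonneg (by linarith) hrc
    have t3 : t ≤ V * (1 + t) := by
      have s1 := mul_le_mul_of_nonneg_left t1 (by linarith : 0 ≤ 1 - c)
      have s2 : t ≤ V * (c + t) := by
        rw [hVdef]; linarith
      nlinarith
    by_contra hcon
    push Not at hcon
    have hV1 : 0 < 1 - V := by nlinarith
    nlinarith
  have hz : ∀ i ∈ Finset.range (d + 1), L - η ≤ (1 + η) * (x * Fbar p x) * gl p 1 (x - i) := by
    intro i hi
    have hid : i ≤ d := Nat.lt_succ_iff.1 (Finset.mem_range.1 hi)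
    have hid' : (i : ℝ) ≤ d := by exact_mod_cast hid
    have hcast : ((x - i : ℕ) : ℝ) = x - i := Nat.cast_sub (hid.trans hdx')
    have hlow : (1 - δ) * x ≤ ((x - i : ℕ) : ℝ) := by rw [hcast]; linarith
    have t1 := hN (x - i) (by exact_mod_cast hx5.trans hlow)
    have t2 : Fbar p ((x - i : ℕ) : ℝ) ≤ (1 + η) * Fbar p x :=
      (fbar_anti hp hp1.summable hlow).trans hx3
    have t3 : ((x - i : ℕ) : ℝ) ≤ x := by exact_mod_cast Nat.sub_le x i
    refine t1.le.trans ?_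
    calc ((x - i : ℕ) : ℝ) * Fbar p ((x - i : ℕ) : ℝ) * gl p 1 (x - i)
        ≤ x * ((1 + η) * Fbar p x) * gl p 1 (x - i) := by
          gcongr
          · exact hg _
          · exact fbar_nonneg hp _
      _ = _ := by ring
  have hres := resolvent_coeff (p := p) (c := c) (by nlinarith [hp 0]) h0 x
  set S := ∑ y ∈ Finset.range (x + 1), gl p c y * gl p 1 (x - y) with hSdef
  have hS : ren p c d * (L - η) ≤ (1 + η) * (x * Fbar p x) * S := by
    rw [hSdef, ren, Finset.sum_mul, Finset.mul_sum]
    refine (Finset.sum_le_sum fun i hi => ?_).trans (Finset.sum_le_sum_of_subset_of_nonneg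
      (Finset.range_mono (by omega : d + 1 ≤ x + 1)) fun i _ _ => ?_)
    · have := mul_le_mul_of_nonneg_left (hz i hi) (hgc i)
      linarith
    · have := hgc i
      have := hg (x - i)
      positivity
  set A : ℝ := x * Fbar p x with hA
  have hA0 : 0 ≤ A := by positivity
  have k1 : L - η ≤ (1 + η) ^ 2 * ((1 - c) * (A * S)) := by
    have s1 := mul_le_mul_of_nonneg_left hS (mul_nonneg (by linarith) (by linarith) : 0 ≤ (1 - c) * (1 + η))
    have s2 := mul_le_mul_of_nonneg_right hV (by linarith : 0 ≤ L - η)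
    linarith
  have hS0 : 0 ≤ (1 - c) * (A * S) := by
    have : 0 ≤ S := Finset.sum_nonneg fun y _ => mul_nonneg (hgc y) (hg _)
    exact mul_nonneg (by linarith) (mul_nonneg hA0 this)
  have k2 : (1 - 2 * η) * (L - η) ≤ (1 - c) * (A * S) := by
    have s1 := mul_le_mul_of_nonneg_left k1 (by linarith : 0 ≤ 1 - 2 * η)
    have s2 : (1 - 2 * η) * (1 + η) ^ 2 ≤ 1 := by nlinarith [pow_pos hη0 3, sq_nonneg η]
    linarith [mul_le_mul_of_nonneg_right s2 hS0]
  have k3 : c * (A * gl p c x) ≤ 2 * η * (1 + L) := by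
    rw [hres] at hx2
    nlinarith
  have k4 : 0 ≤ A * gl p c x := mul_nonneg hA0 (hgc x)
  nlinarith

/-! ### Consequences for the jump probabilities -/

lemma single_jump {p : ℕ → ℝ} {c : ℝ} (hp : ∀ k, 0 ≤ p k) (hc0 : 0 ≤ c) (hc1 : c ≤ 1)
    (h0 : p 0 < 1) (x : ℕ) : c * p x ≤ gl p c x := by
  have h : c * p 0 < 1 := by nlinarith [hp 0]
  have h1 := res_mul h
  have hP : NN (mk p) := fun n => by simpa using hp n
  have e : res p c = 1 + C c * mk p + C c * mk p * (C c * mk p * res p c) := by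
    linear_combination (1 + C c * mk p) * h1
  have e' := congrArg (coeff x) e
  rw [map_add, map_add, coeff_C_mul, coeff_mk] at e'
  have t1 := (((NN.C hc0).mul hP).mul (((NN.C hc0).mul hP).mul (res_nonneg hp hc0 h))) x
  have t2 : 0 ≤ coeff x (1 : PowerSeries ℝ) := by
    rw [coeff_one]; split_ifs <;> simp
  unfold gl
  linarith

lemma eventually_half {p : ℕ → ℝ} (hp : ∀ k, 0 ≤ p k) (hp1 : HasSum p 1) {K : ℝ} (hK : 0 < K) :
    ∀ᶠ x : ℕ in atTop, 1 / 2 ≤ 1 - K * Fbar p x ∧ 1 - K * Fbar p x ≤ 1 := by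
  have e4 : ∀ᶠ x : ℕ in atTop, Fbar p x < 1 / (2 * K) :=
    (fbar_tendsto hp1).eventually (gt_mem_nhds (by positivity))
  filter_upwards [e4] with x hx
  rw [lt_div_iff₀ (by positivity)] at hx
  have := mul_nonneg hK.le (fbar_nonneg hp x)
  constructor <;> linarith

/-- Conclusion (a): a single jump to `x` contributes `c p(x)` to the killed mass `g_c(x)`, which is
negligible by `killed_small`. -/
lemma tendsto_single {p : ℕ → ℝ} {α L : ℝ} (hp : ∀ k, 0 ≤ p k) (hp1 : HasSum p 1) (h0 : p 0 < 1)
    (hreg : ∀ l : ℝ, 0 < l →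
      Tendsto (fun x : ℝ => Fbar p (l * x) / Fbar p x) atTop (𝓝 (l ^ (-α))))
    (hL : 0 < L) (hlim : Tendsto (fun x : ℕ => (x : ℝ) * Fbar p x * gl p 1 x) atTop (𝓝 L)) :
    Tendsto (fun x : ℕ => (x : ℝ) * Fbar p x * p x) atTop (𝓝 0) := by
  rw [Metric.tendsto_atTop']
  intro ε hε
  obtain ⟨K, hK, hsmall⟩ := killed_small hp hp1 h0 hreg hL hlim (by positivity : 0 < ε / 4)
  obtain ⟨N, hN⟩ := eventually_atTop.1 (hsmall.and (eventually_half hp hp1 hK))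
  refine ⟨N, fun x hx => ?_⟩
  obtain ⟨h1, h2, h3⟩ := hN x hx.le
  have h4 := single_jump hp (by linarith) h3 h0 x
  have hA : 0 ≤ (x : ℝ) * Fbar p x := mul_nonneg (Nat.cast_nonneg _) (fbar_nonneg hp _)
  have hAp := mul_nonneg hA (hp x)
  rw [Real.dist_eq, sub_zero, abs_of_nonneg hAp]
  have h5 := mul_le_mul_of_nonneg_left h4 hA
  nlinarith [mul_le_mul_of_nonneg_right h2 hAp]

/-- For each fixed shift `w`, `x F̄(x) p(x - w) → 0`. -/
lemma tendsto_shift {p : ℕ → ℝ} (hp : ∀ k, 0 ≤ p k) (hs : Summable p)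
    (ha : Tendsto (fun x : ℕ => (x : ℝ) * Fbar p x * p x) atTop (𝓝 0)) (w : ℕ) :
    Tendsto (fun x : ℕ => (x : ℝ) * Fbar p x * p (x - w)) atTop (𝓝 0) := by
  have h1 := (ha.comp (tendsto_sub_atTop_nat w)).const_mul 2
  rw [mul_zero] at h1
  refine tendsto_of_tendsto_of_tendsto_of_le_of_le' tendsto_const_nhds h1 ?_ ?_
  · exact Eventually.of_forall fun x =>
      mul_nonneg (mul_nonneg (Nat.cast_nonneg _) (fbar_nonneg hp _)) (hp _)
  · filter_upwards [eventually_ge_atTop (2 * w)] with x hx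
    have t1 : (x : ℝ) ≤ 2 * ((x - w : ℕ) : ℝ) := by exact_mod_cast (by omega : x ≤ 2 * (x - w))
    have t2 : Fbar p x ≤ Fbar p ((x - w : ℕ) : ℝ) :=
      fbar_anti hp hs (by exact_mod_cast Nat.sub_le x w)
    calc (x : ℝ) * Fbar p x * p (x - w)
        ≤ (2 * ((x - w : ℕ) : ℝ)) * Fbar p ((x - w : ℕ) : ℝ) * p (x - w) := by
          gcongr
          · exact hp _
          · exact fbar_nonneg hp _
      _ = _ := by simp only [Function.comp]; ring

/-- The quantity in (b) is at most `ε` for all large `x` once `δ` is small. Small `w` are handled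
by (a); for the others the one-big-jump bound at killing rate `K F̄(x)` compares the sum with
`g_c(x)`, and the smallness of `δ` ensures `K F̄(x) ≤ F̄(w) / 32` for `w ≤ δ x`. -/
lemma sum_small {p : ℕ → ℝ} {α L ε : ℝ} (hp : ∀ k, 0 ≤ p k) (hp1 : HasSum p 1) (h0 : p 0 < 1)
    (hα : 0 < α)
    (hreg : ∀ l : ℝ, 0 < l →
      Tendsto (fun x : ℝ => Fbar p (l * x) / Fbar p x) atTop (𝓝 (l ^ (-α))))
    (hL : 0 < L) (hlim : Tendsto (fun x : ℕ => (x : ℝ) * Fbar p x * gl p 1 x) atTop (𝓝 L))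
    (hε : 0 < ε) :
    ∀ᶠ δ : ℝ in 𝓝[>] 0, ∀ᶠ x : ℕ in atTop, (x : ℝ) * Fbar p x *
      ∑ w ∈ Finset.Icc 1 ⌊δ * (x : ℝ)⌋₊, p (x - w) / ((w : ℝ) * (Fbar p w) ^ 2) ≤ ε := by
  obtain ⟨b, hb, w₀, hw₀⟩ := conv_lower hp hp1 h0 hreg hL hlim
  obtain ⟨K, hK, hsmall⟩ := killed_small hp hp1 h0 hreg hL hlim (by positivity : 0 < ε * b / 4)
  have hδ1 : ∀ᶠ δ : ℝ in 𝓝[>] 0, 32 * K < δ ^ (-α) :=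
    (tendsto_rpow_neg_nhdsGT_zero (by linarith)).eventually (eventually_gt_atTop _)
  have hδ2 : ∀ᶠ δ : ℝ in 𝓝[>] 0, δ ∈ Set.Ioo (0 : ℝ) (1 / 2) := Ioo_mem_nhdsGT (by norm_num)
  have hfin : Tendsto (fun x : ℕ => ∑ w ∈ Finset.Icc 1 w₀,
      ((x : ℝ) * Fbar p x * p (x - w)) * (1 / ((w : ℝ) * (Fbar p w) ^ 2))) atTop (𝓝 0) := by
    have ha := tendsto_single hp hp1 h0 hreg hL hlim
    have := tendsto_finsetSum (Finset.Icc 1 w₀) fun w _ =>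
      (tendsto_shift hp hp1.summable ha w).mul_const (1 / ((w : ℝ) * (Fbar p w) ^ 2))
    simpa using this
  have hfin' := hfin.eventually (gt_mem_nhds (by positivity : 0 < ε / 2))
  filter_upwards [hδ1, hδ2] with δ h1 h2
  filter_upwards [hsmall, eventually_half hp hp1 hK, hfin', eventually_gt_atTop 0,
    fbar_scale_ge hp hp1.summable hreg h2.1 h1] with x hx1 hx2 hx3 hx4 hx5
  have hxpos : (0 : ℝ) < x := by exact_mod_cast hx4
  have hWx : (⌊δ * (x : ℝ)⌋₊ : ℝ) ≤ δ * x := Nat.floor_le (by have := h2.1; positivity)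
  set W := ⌊δ * (x : ℝ)⌋₊
  have hW2 : 2 * W < x := by
    have : 2 * (W : ℝ) < x := by nlinarith [h2.2]
    exact_mod_cast this
  have hA : 0 ≤ (x : ℝ) * Fbar p x := mul_nonneg (Nat.cast_nonneg _) (fbar_nonneg hp _)
  set A := (x : ℝ) * Fbar p x
  set c := 1 - K * Fbar p x with hc
  have hjump := one_big_jump hp (by linarith [hx2.1] : 0 ≤ c) hx2.2 h0 hW2
  have hres : NN (res p c) := res_nonneg hp (by linarith [hx2.1]) (by nlinarith [hp 0, hx2.1, hx2.2])
  have hcoeff : NN (res p c * res p c) := hres.mul hres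
  -- termwise bound, separating `w ≤ w₀` from `w > w₀`
  have hterm : ∀ w ∈ Finset.Icc 1 W, p (x - w) / ((w : ℝ) * (Fbar p w) ^ 2) ≤
      (if w ≤ w₀ then p (x - w) * (1 / ((w : ℝ) * (Fbar p w) ^ 2)) else 0) +
        1 / b * (p (x - w) * coeff w (res p c * res p c)) := by
    intro w hw
    rw [Finset.mem_Icc] at hw
    have hcw := hcoeff w
    have hpx := hp (x - w)
    split_ifs with hww
    · rw [div_eq_mul_one_div]
      have : 0 ≤ 1 / b * (p (x - w) * coeff w (res p c * res p c)) := by positivity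
      linarith
    · have hw' : (w : ℝ) ≤ δ * x := le_trans (by exact_mod_cast hw.2) hWx
      have hf : 32 * K * Fbar p x ≤ Fbar p w := hx5.trans (fbar_anti hp hp1.summable hw')
      have t := hw₀ w (by omega) c (by linarith [hx2.1]) hx2.2 (by rw [hc]; linarith)
      have hwpos : (0 : ℝ) < w := by exact_mod_cast hw.1
      have hfpos := fbar_pos hp hp1.summable hreg w
      rw [zero_add, div_le_iff₀ (by positivity)]
      have : 1 ≤ 1 / b * (w * Fbar p w ^ 2 * coeff w (res p c * res p c)) := by
        rw [one_div, ← div_eq_inv_mul, le_div_iff₀ hb]; linarith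
      nlinarith [mul_le_mul_of_nonneg_left this hpx]
  have hsum := Finset.sum_le_sum hterm
  rw [Finset.sum_add_distrib, ← Finset.mul_sum] at hsum
  have k1 : A * ∑ w ∈ Finset.Icc 1 W,
      (if w ≤ w₀ then p (x - w) * (1 / ((w : ℝ) * (Fbar p w) ^ 2)) else 0) ≤ ε / 2 := by
    refine le_trans ?_ hx3.le
    rw [← Finset.sum_filter, Finset.mul_sum]
    have hnn : ∀ w : ℕ, 0 ≤ A * p (x - w) * (1 / ((w : ℝ) * (Fbar p w) ^ 2)) := fun w =>
      mul_nonneg (mul_nonneg hA (hp _)) (by positivity)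
    refine le_trans (le_of_eq (Finset.sum_congr rfl fun w _ => (mul_assoc _ _ _).symm))
      (Finset.sum_le_sum_of_subset_of_nonneg ?_ fun w _ _ => hnn w)
    intro w hw
    simp only [Finset.mem_filter, Finset.mem_Icc] at hw ⊢
    omega
  set J := ∑ w ∈ Finset.range (W + 1), p (x - w) * coeff w (res p c * res p c) with hJ
  have k2 : ∑ w ∈ Finset.Icc 1 W, p (x - w) * coeff w (res p c * res p c) ≤ J := by
    refine Finset.sum_le_sum_of_subset_of_nonneg ?_ fun w _ _ => mul_nonneg (hp _) (hcoeff w)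
    intro w hw
    rw [Finset.mem_Icc] at hw
    exact Finset.mem_range.2 (by omega)
  have hJ0 : 0 ≤ A * J := mul_nonneg hA
    (Finset.sum_nonneg fun w _ => mul_nonneg (hp _) (hcoeff w))
  have k3 : A * J ≤ ε * b / 2 := by
    have s1 := mul_le_mul_of_nonneg_left hjump hA
    have s2 := mul_le_mul_of_nonneg_right hx2.1 hJ0
    linarith
  have k4 : A * (1 / b * ∑ w ∈ Finset.Icc 1 W, p (x - w) * coeff w (res p c * res p c))
      ≤ ε / 2 := by
    calc A * (1 / b * ∑ w ∈ Finset.Icc 1 W, p (x - w) * coeff w (res p c * res p c))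
        ≤ A * (1 / b * J) := by gcongr
      _ = 1 / b * (A * J) := by ring
      _ ≤ 1 / b * (ε * b / 2) := by gcongr
      _ = ε / 2 := by field_simp
  have k5 := mul_le_mul_of_nonneg_left hsum hA
  rw [mul_add] at k5
  linarith

end SRT

/-- necessity. If `α ∈ (0, 1/2]` and the SRT holds, then
(a) `x·F̄(x)·p(x) → 0` and
(b) `lim_{δ→0} limsup_{x→∞} x·F̄(x)·Σ_{w=1}^{⌊δx⌋} p(x−w)/(w·F̄(w)²) = 0`. -/
theorem srt_necessity (p : ℕ → ℝ) (α : ℝ)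
    (hp0 : ∀ k, 0 ≤ p k) (hp1 : HasSum p 1) (hp0lt : p 0 < 1)
    (hap : ∀ d : ℕ, (∀ k, p k ≠ 0 → d ∣ k) → d = 1)
    (hα : 0 < α ∧ α ≤ 1 / 2)
    (hreg : ∀ l : ℝ, 0 < l →
      Tendsto (fun x : ℝ => Fbar p (l * x) / Fbar p x) atTop (nhds (l ^ (-α))))
    (hSRT : ∃ L : ℝ, 0 < L ∧
      Tendsto (fun x : ℕ => (x : ℝ) * Fbar p x * renewalMass p x) atTop (nhds L)) :
    Tendsto (fun x : ℕ => (x : ℝ) * Fbar p x * p x) atTop (nhds 0) ∧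
    Tendsto (fun δ : ℝ =>
        limsup (fun x : ℕ => (x : ℝ) * Fbar p x *
          ∑ w ∈ Finset.Icc 1 ⌊δ * (x : ℝ)⌋₊, p (x - w) / ((w : ℝ) * (Fbar p w) ^ 2)) atTop)
      (𝓝[>] (0 : ℝ)) (nhds 0) := by
  obtain ⟨L, hL, hlim⟩ := hSRT
  simp only [SRT.renewalMass_eq_s3 hp0 hp0lt] at hlim
  refine ⟨SRT.tendsto_single hp0 hp1 hp0lt hreg hL hlim, ?_⟩
  have hnn : ∀ (δ : ℝ) (x : ℕ), 0 ≤ (x : ℝ) * Fbar p x *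
      ∑ w ∈ Finset.Icc 1 ⌊δ * (x : ℝ)⌋₊, p (x - w) / ((w : ℝ) * (Fbar p w) ^ 2) := fun δ x =>
    mul_nonneg (mul_nonneg (Nat.cast_nonneg _) (SRT.fbar_nonneg hp0 _))
      (Finset.sum_nonneg fun w _ => div_nonneg (hp0 _) (by positivity))
  rw [Metric.tendsto_nhds]
  intro ε hε
  filter_upwards [SRT.sum_small hp0 hp1 hp0lt hα.1 hreg hL hlim (half_pos hε)] with δ hδ
  -- boundedness is needed on both sides, as a real `limsup` of an unbounded family is a junk value
  have h1 := limsup_le_of_le (isCoboundedUnder_le_of_le atTop (hnn δ)) hδ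
  have h2 := le_limsup_of_frequently_le (Eventually.of_forall (hnn δ)).frequently
    (isBoundedUnder_of_eventually_le hδ)
  rw [Real.dist_eq, sub_zero, abs_of_nonneg h2]
  linarith
end

section
/- The condition x·F̄(x)·p(x) → 0 as x → ∞ holds if and only if for every fixed integer n₀ ≥ 1 one has x·F̄(x)·Σ_{n=1}^{n₀} P(Sₙ = x) → 0 as x → ∞. -/
/-!
The weight `a(x) = x·F̄(x)` satisfies `a(x) ≤ 2 a(z)` whenever `z ≤ x ≤ 2z`, because `F̄` is
nonincreasing. In the convolution `∑ f(y) g(x - y)` one of the two arguments is at least `x / 2`,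
so each term weighted by `a(x)` is at most `2δ (f(y) + g(x - y))` once `a·f, a·g ≤ δ` beyond
`x / 2`. As the masses of `f` and `g` are at most `1`, the property `a·f → 0` is stable
under convolution (`tendsto_mul_conv`), hence passes from `p` to all its convolution powers and to
finite sums of them. The converse is the case `n₀ = 1`.
-/

open Filter Topology

theorem convPow_nonneg {p : ℕ → ℝ} (hp0 : ∀ k, 0 ≤ p k) (n x : ℕ) : 0 ≤ convPow p n x := by
  induction n generalizing x with
  | zero => simp only [convPow]; split_ifs <;> norm_num
  | succ n ih => exact Finset.sum_nonneg fun y _ => mul_nonneg (ih y) (hp0 _)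

theorem convPow_one (p : ℕ → ℝ) (x : ℕ) : convPow p 1 x = p x := by
  simp [convPow]

theorem sum_range_convPow_le_one {p : ℕ → ℝ} (hp0 : ∀ k, 0 ≤ p k)
    (hp1 : ∀ N, ∑ k ∈ Finset.range N, p k ≤ 1) (n N : ℕ) :
    ∑ x ∈ Finset.range N, convPow p n x ≤ 1 := by
  induction n generalizing N with
  | zero =>
    simp only [convPow, Finset.sum_ite_eq']
    split_ifs <;> norm_num
  | succ n ih =>
    have swap : ∑ x ∈ Finset.range N, convPow p (n + 1) x
        = ∑ y ∈ Finset.range N, ∑ x ∈ Finset.Ico y N, convPow p n y * p (x - y) := by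
      simp only [convPow]
      apply Finset.sum_comm'
      intro x y
      simp only [Finset.mem_range, Finset.mem_Ico]
      omega
    rw [swap]
    refine le_trans (Finset.sum_le_sum fun y _ => ?_) (ih N)
    rw [← Finset.mul_sum, Finset.sum_Ico_eq_sum_range]
    simp only [Nat.add_sub_cancel_left]
    exact mul_le_of_le_one_right (convPow_nonneg hp0 n y) (hp1 _)

theorem Fbar_nonneg {p : ℕ → ℝ} (hp0 : ∀ k, 0 ≤ p k) (x : ℝ) : 0 ≤ Fbar p x :=
  tsum_nonneg fun k => by split_ifs <;> simp [hp0]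

theorem Fbar_antitone {p : ℕ → ℝ} (hp0 : ∀ k, 0 ≤ p k) (hp : Summable p) :
    Antitone (Fbar p) := by
  have hs : ∀ x : ℝ, Summable fun k : ℕ => if x < (k : ℝ) then p k else 0 := fun x =>
    Summable.of_nonneg_of_le (fun k => by split_ifs <;> simp [hp0])
      (fun k => by split_ifs <;> simp [hp0]) hp
  intro x y hxy
  refine Summable.tsum_le_tsum (fun k => ?_) (hs y) (hs x)
  split_ifs with h1 h2 h2
  · exact le_rfl
  · exact absurd (hxy.trans_lt h1) h2
  · exact hp0 k
  · exact le_rfl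

/-- If `a x` is at most twice `a z` for `z ∈ [x / 2, x]`, then the property `a * f → 0`
is stable under convolution of sub-probability mass functions. -/
theorem tendsto_mul_conv {a f g : ℕ → ℝ} (ha0 : ∀ x, 0 ≤ a x)
    (ha : ∀ x z, z ≤ x → x ≤ 2 * z → a x ≤ 2 * a z)
    (hf0 : ∀ x, 0 ≤ f x) (hg0 : ∀ x, 0 ≤ g x)
    (hf1 : ∀ N, ∑ k ∈ Finset.range N, f k ≤ 1) (hg1 : ∀ N, ∑ k ∈ Finset.range N, g k ≤ 1)
    (hf : Tendsto (fun x => a x * f x) atTop (nhds 0))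
    (hg : Tendsto (fun x => a x * g x) atTop (nhds 0)) :
    Tendsto (fun x => a x * ∑ y ∈ Finset.range (x + 1), f y * g (x - y)) atTop (nhds 0) := by
  rw [Metric.tendsto_atTop]
  intro ε hε
  have hδ : 0 < ε / 8 := by positivity
  obtain ⟨N, hN⟩ := eventually_atTop.1
    ((hf.eventually (gt_mem_nhds hδ)).and (hg.eventually (gt_mem_nhds hδ)))
  refine ⟨2 * N, fun x hx => ?_⟩
  have hterm : ∀ y ∈ Finset.range (x + 1),
      a x * (f y * g (x - y)) ≤ 2 * (ε / 8) * (f y + g (x - y)) := by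
    intro y hy
    rw [Finset.mem_range] at hy
    have hfy := hf0 y
    have hgy := hg0 (x - y)
    rcases le_total x (2 * y) with h | h
    · have h1 : a x * f y ≤ 2 * (ε / 8) := by
        have := mul_le_mul_of_nonneg_right (ha x y (by omega) h) hfy
        linarith [(hN y (by omega)).1]
      have := mul_le_mul_of_nonneg_right h1 hgy
      nlinarith
    · have h1 : a x * g (x - y) ≤ 2 * (ε / 8) := by
        have := mul_le_mul_of_nonneg_right (ha x (x - y) (by omega) (by omega)) hgy
        linarith [(hN (x - y) (by omega)).2]
      have := mul_le_mul_of_nonneg_right h1 hfy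
      nlinarith
  have hrefl : ∑ y ∈ Finset.range (x + 1), g (x - y) ≤ 1 := by
    have := Finset.sum_range_reflect g (x + 1)
    simp only [Nat.add_sub_cancel] at this
    exact this.le.trans (hg1 _)
  have hsum := Finset.sum_le_sum hterm
  rw [← Finset.mul_sum, ← Finset.mul_sum, Finset.sum_add_distrib] at hsum
  have hnn : 0 ≤ a x * ∑ y ∈ Finset.range (x + 1), f y * g (x - y) :=
    mul_nonneg (ha0 x) (Finset.sum_nonneg fun y _ => mul_nonneg (hf0 _) (hg0 _))
  rw [Real.dist_eq, sub_zero, abs_of_nonneg hnn]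
  nlinarith [hf1 (x + 1)]

/-- `x·F̄(x)·p(x) → 0` iff for every fixed `n₀ ≥ 1`,
`x·F̄(x)·Σ_{n=1}^{n₀} P(Sₙ = x) → 0` as `x → ∞`. -/
theorem cond_rz_iff_r1 (p : ℕ → ℝ) (α : ℝ)
    (hp0 : ∀ k, 0 ≤ p k) (hp1 : HasSum p 1) (hp0lt : p 0 < 1)
    (hap : ∀ d : ℕ, (∀ k, p k ≠ 0 → d ∣ k) → d = 1)
    (hα : 0 < α ∧ α < 1)
    (hreg : ∀ l : ℝ, 0 < l →
      Tendsto (fun x : ℝ => Fbar p (l * x) / Fbar p x) atTop (nhds (l ^ (-α)))) :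
    Tendsto (fun x : ℕ => (x : ℝ) * Fbar p x * p x) atTop (nhds 0) ↔
      ∀ n₀ : ℕ, 1 ≤ n₀ →
        Tendsto (fun x : ℕ => (x : ℝ) * Fbar p x * ∑ n ∈ Finset.Icc 1 n₀, convPow p n x)
          atTop (nhds 0) := by
  have hps : ∀ N, ∑ k ∈ Finset.range N, p k ≤ 1 := fun N =>
    sum_le_hasSum _ (fun k _ => hp0 k) hp1
  constructor
  · intro h n₀ _
    have ha0 : ∀ x : ℕ, 0 ≤ (x : ℝ) * Fbar p x := fun x =>
      mul_nonneg x.cast_nonneg (Fbar_nonneg hp0 _)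
    have ha : ∀ x z : ℕ, z ≤ x → x ≤ 2 * z →
        (x : ℝ) * Fbar p x ≤ 2 * ((z : ℝ) * Fbar p z) := by
      intro x z hzx hxz
      have h1 : Fbar p x ≤ Fbar p z := Fbar_antitone hp0 hp1.summable (by exact_mod_cast hzx)
      have h2 : (x : ℝ) ≤ 2 * z := by exact_mod_cast hxz
      calc (x : ℝ) * Fbar p x ≤ (2 * z) * Fbar p z :=
            mul_le_mul h2 h1 (Fbar_nonneg hp0 _) (by positivity)
        _ = _ := by ring
    have key : ∀ n : ℕ,
        Tendsto (fun x : ℕ => (x : ℝ) * Fbar p x * convPow p (n + 1) x) atTop (nhds 0) := by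
      intro n
      induction n with
      | zero => simpa only [zero_add, convPow_one] using h
      | succ n ih =>
        exact tendsto_mul_conv ha0 ha (convPow_nonneg hp0 (n + 1)) hp0
          (sum_range_convPow_le_one hp0 hps (n + 1)) hps ih h
    simp only [Finset.mul_sum]
    rw [← Finset.sum_const_zero (s := Finset.Icc 1 n₀)]
    refine tendsto_finsetSum _ fun n hn => ?_
    obtain ⟨m, rfl⟩ := Nat.exists_eq_add_of_le' (Finset.mem_Icc.1 hn).1
    exact key m
  · intro h
    simpa [convPow_one] using h 1 le_rfl
end
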